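/- Let D be a domain in ℝ^n, n ≥ 2, x_0 ∈ D, Q:D→(0,∞) a measurable function, p > n−1, and let f:D→ℝ^n be a lower Q-homeomorphism with respect to p-modulus at x_0. Then for all 0 < r_1 < r_2 < dist(x_0,∂D), the p/(p−n+1)-modulus of the family of curves joining f(S_1) and f(S_2) in f(D) satisfies M_{p/(p−n+1)}(Δ(fS_1, fS_2; fD)) ≤ (∫_{r_1}^{r_2} dr / ‖Q‖_{(n−1)/(p−n+1)}(r))^{−(n−1)/(p−n+1)}, where S_j = S(x_0,r_j), j = 1,2, and ‖Q‖_{(n−1)/(p−n+1)}(r) = (∫_{D∩S(x_0,r)} Q(x)^{(n−1)/(p−n+1)} dA)^{(p−n+1)/(n−1)}. -/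

import Mathlib

open MeasureTheory Metric Set Filter
open scoped ENNReal NNReal Topology RealInnerProductSpace Classical

noncomputable section

abbrev Eucl (n : ℕ) : Type := EuclideanSpace ℝ (Fin n)

/-- A `k`-dimensional surface in `ℝⁿ`: a continuous map defined on an open subset of the
one-point compactification of `ℝᵏ`. -/
structure Surface (n k : ℕ) where
  dom : Set (OnePoint (Eucl k))
  isOpen_dom : IsOpen dom
  toFun : OnePoint (Eucl k) → Eucl n
  continuousOn : ContinuousOn toFun dom

namespace Surface

variable {n k : ℕ}

/-- The multiplicity function `N(S,y)` of a surface. -/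
def mult (S : Surface n k) (y : Eucl n) : ℝ≥0∞ :=
  ((S.dom ∩ S.toFun ⁻¹' {y}).encard : ℕ∞)

/-- The integral `∫_S ρ dA = ∫ ρ(y) N(S,y) dH^k(y)` of `ρ` over the surface `S`. -/
def sint (S : Surface n k) (ρ : Eucl n → ℝ≥0∞) : ℝ≥0∞ :=
  ∫⁻ y, ρ y * S.mult y ∂(μH[(k : ℝ)] : Measure (Eucl n))

end Surface

/-- Admissible functions for a family of `k`-surfaces. -/
def surfAdm {n : ℕ} (k : ℕ) (Γ : Set (Surface n k)) : Set (Eucl n → ℝ≥0∞) :=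
  {ρ | Measurable ρ ∧ ∀ S ∈ Γ, 1 ≤ S.sint fun y => ρ y ^ k}

/-- The `p`-modulus of a family of `k`-surfaces. -/
def surfModulus {n : ℕ} (p : ℝ) (k : ℕ) (Γ : Set (Surface n k)) : ℝ≥0∞ :=
  ⨅ ρ ∈ surfAdm k Γ, ∫⁻ x, ρ x ^ p

/-- Extensively `p`-admissible functions: admissibility may fail on a subfamily of
`p`-modulus zero. -/
def extAdm {n : ℕ} (p : ℝ) (k : ℕ) (Γ : Set (Surface n k)) : Set (Eucl n → ℝ≥0∞) :=
  {ρ | Measurable ρ ∧ surfModulus p k {S ∈ Γ | ¬ 1 ≤ S.sint fun y => ρ y ^ k} = 0}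

/-- The family of the (injectively parametrized, nonempty) surfaces `S(x₀,r) ∩ D`,
`r ∈ I`. -/
def sphereFam {n : ℕ} (D : Set (Eucl n)) (x₀ : Eucl n) (I : Set ℝ) :
    Set (Surface n (n - 1)) :=
  {S | ∃ r ∈ I, S.dom.Nonempty ∧ Set.InjOn S.toFun S.dom ∧
      S.toFun '' S.dom = sphere x₀ r ∩ D}

/-- The image of a family of surfaces under a map `f`. -/
def imageFam {n k : ℕ} (f : Eucl n → Eucl n) (Γ : Set (Surface n k)) :
    Set (Surface n k) :=
  {S' | ∃ S ∈ Γ, S'.dom = S.dom ∧ Set.EqOn S'.toFun (f ∘ S.toFun) S.dom}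

/-- The spherical ring `R(x₀,a,b)`. -/
def ringA {n : ℕ} (x₀ : Eucl n) (a b : ℝ) : Set (Eucl n) :=
  {x | a < dist x x₀ ∧ dist x x₀ < b}

/-- `‖Q‖_α(r) = (∫_{D ∩ S(x₀,r)} Q^α dA)^{1/α}`. -/
def sphNorm {n : ℕ} (D : Set (Eucl n)) (x₀ : Eucl n) (Q : Eucl n → ℝ≥0∞)
    (α : ℝ) (r : ℝ) : ℝ≥0∞ :=
  (∫⁻ x in D ∩ sphere x₀ r, Q x ^ α ∂(μH[((n : ℝ) - 1)] : Measure (Eucl n))) ^ (1 / α)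

/-- `f` is a lower `Q`-homeomorphism w.r.t. the `p`-modulus at `x₀`. -/
def IsLowerQHomeoAt {n : ℕ} (D : Set (Eucl n)) (f : Eucl n → Eucl n)
    (Q : Eucl n → ℝ≥0∞) (p : ℝ) (x₀ : Eucl n) (d₀ : ℝ≥0∞) : Prop :=
  ∀ ε ε₀ : ℝ, 0 < ε → ε < ε₀ → ENNReal.ofReal ε₀ < d₀ →
    (⨅ ρ ∈ extAdm p (n - 1) (sphereFam D x₀ (Ioo ε ε₀)),
        ∫⁻ x in ringA x₀ ε ε₀, ρ x ^ p / Q x) ≤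
      surfModulus p (n - 1) (imageFam f (sphereFam D x₀ (Ioo ε ε₀)))

/-- `f` is a homeomorphism of `D` onto `D'`. -/
structure IsHomeoOn {n : ℕ} (f : Eucl n → Eucl n) (D D' : Set (Eucl n)) : Prop where
  continuousOn : ContinuousOn f D
  injOn : Set.InjOn f D
  image_eq : f '' D = D'
  isOpenMapOn : ∀ U : Set (Eucl n), U ⊆ D → IsOpen U → IsOpen (f '' U)

/-- `Df` is the weak (Sobolev) derivative of `f` on `D`, and `f ∈ W^{1,1}_loc(D)`. -/
def IsWeakDerivOn {n m : ℕ} (D : Set (Eucl n)) (f : Eucl n → Eucl m)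
    (Df : Eucl n → Eucl n →L[ℝ] Eucl m) : Prop :=
  LocallyIntegrableOn f D volume ∧ LocallyIntegrableOn Df D volume ∧
  ∀ ψ : Eucl n → ℝ, ContDiff ℝ (⊤ : ℕ∞) ψ → HasCompactSupport ψ → tsupport ψ ⊆ D →
    ∀ v : Eucl n, ∫ x, ψ x • Df x v = - ∫ x, fderiv ℝ ψ x v • f x

/-- The Frobenius norm `|∇f| = (Σ_{i,j} (∂f_i/∂x_j)²)^{1/2}` of a linear map. -/
def frobNorm {n m : ℕ} (A : Eucl n →L[ℝ] Eucl m) : ℝ :=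
  Real.sqrt (∑ i : Fin m, ∑ j : Fin n, (A (EuclideanSpace.single j 1) i) ^ 2)

/-- The Orlicz–Sobolev class `W^{1,φ}_loc(D)` (with explicit weak derivative `Df`). -/
def MemOrliczSobolevOn {n m : ℕ} (φ : ℝ → ℝ) (D : Set (Eucl n))
    (f : Eucl n → Eucl m) (Df : Eucl n → Eucl n →L[ℝ] Eucl m) : Prop :=
  IsWeakDerivOn D f Df ∧
  ∀ K : Set (Eucl n), K ⊆ D → IsCompact K →
    (∫⁻ x in K, ENNReal.ofReal (φ (frobNorm (Df x)))) < ⊤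

/-- `φ` is nondecreasing and positive on `(0,∞)`. -/
def NondecPos (φ : ℝ → ℝ) : Prop :=
  (∀ s t : ℝ, 0 < s → s ≤ t → φ s ≤ φ t) ∧ ∀ t : ℝ, 0 < t → 0 < φ t

/-- The Calderón-type condition `∫_{t₀}^∞ (t/φ(t))^{1/(n-2)} dt < ∞`. -/
def CalderonCond (n : ℕ) (φ : ℝ → ℝ) : Prop :=
  ∃ t₀ : ℝ, 0 < t₀ ∧
    IntegrableOn (fun t => (t / φ t) ^ (1 / ((n : ℝ) - 2))) (Ioi t₀) volume

/-- `f` (with a.e. derivative `Df`) has finite distortion on `D`. -/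
def HasFiniteDistortionOn {n : ℕ} (D : Set (Eucl n))
    (Df : Eucl n → Eucl n →L[ℝ] Eucl n) : Prop :=
  ∃ K : Eucl n → ℝ, AEMeasurable K (volume.restrict D) ∧
    ∀ᵐ x ∂volume.restrict D, 1 ≤ K x ∧ ‖Df x‖ ^ n ≤ K x * (Df x).det

/-- The distortion `K_p(x,f)` for a map with derivative `Df`. -/
def distortionKp {n : ℕ} (p : ℝ) (Df : Eucl n → Eucl n →L[ℝ] Eucl n)
    (x : Eucl n) : ℝ≥0∞ :=
  if (Df x).det ≠ 0 then ENNReal.ofReal (‖Df x‖ ^ p / (Df x).det)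
  else if Df x = 0 then 1 else ⊤

/-- The multiplicity function of a curve `γ : [0,1] → ℝⁿ`. -/
def curveMult {n : ℕ} (γ : ℝ → Eucl n) (y : Eucl n) : ℝ≥0∞ :=
  (({t ∈ Icc (0:ℝ) 1 | γ t = y}).encard : ℕ∞)

/-- The line integral `∫_γ ρ ds = ∫ ρ(y) N(γ,y) dH¹(y)`. -/
def curveInt {n : ℕ} (γ : ℝ → Eucl n) (ρ : Eucl n → ℝ≥0∞) : ℝ≥0∞ :=
  ∫⁻ y, ρ y * curveMult γ y ∂(μH[(1 : ℝ)] : Measure (Eucl n))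

/-- The family of curves joining `A` and `B` in `G`. -/
def curveJoin {n : ℕ} (A B G : Set (Eucl n)) : Set (ℝ → Eucl n) :=
  {γ | ContinuousOn γ (Icc 0 1) ∧ γ 0 ∈ A ∧ γ 1 ∈ B ∧ Set.MapsTo γ (Icc 0 1) G}

/-- The `q`-modulus of a family of curves. -/
def curveModulus {n : ℕ} (q : ℝ) (Γ : Set (ℝ → Eucl n)) : ℝ≥0∞ :=
  ⨅ ρ ∈ {ρ : Eucl n → ℝ≥0∞ | Measurable ρ ∧ ∀ γ ∈ Γ, 1 ≤ curveInt γ ρ},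
    ∫⁻ x, ρ x ^ q

/-- The `q`-capacity of the condenser `(A,C)`, via the modulus of joining curves. -/
def condenserCap {n : ℕ} (q : ℝ) (A C : Set (Eucl n)) : ℝ≥0∞ :=
  curveModulus q (curveJoin (frontier A) (frontier C) (A \ C))

/-- `L(x₀,f) = limsup_{x→x₀} |f(x)-f(x₀)|/|x-x₀|`. -/
def LAt {n : ℕ} (f : Eucl n → Eucl n) (x₀ : Eucl n) : ℝ≥0∞ :=
  limsup (fun x => edist (f x) (f x₀) / edist x x₀) (𝓝[≠] x₀)

/-- `k_p(x₀) = limsup_{ε→0} (⨍_{B(x₀,ε)} K_p(x,f)^{(n-1)/(p-n+1)} dm)^{(p-n+1)/(n-1)}`. -/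
def kpAt {n : ℕ} (p : ℝ) (Df : Eucl n → Eucl n →L[ℝ] Eucl n) (x₀ : Eucl n) : ℝ≥0∞ :=
  limsup (fun ε : ℝ =>
      ((∫⁻ x in ball x₀ ε, distortionKp p Df x ^ (((n:ℝ)-1)/(p-(n:ℝ)+1))) /
        volume (ball x₀ ε)) ^ ((p-(n:ℝ)+1)/((n:ℝ)-1)))
    (𝓝[>] (0:ℝ))

/-- `f` is absolutely continuous on `S` w.r.t. `d`-dimensional Hausdorff measure. -/
def ACOnSet {n m : ℕ} (f : Eucl n → Eucl m) (S : Set (Eucl n)) (d : ℝ) : Prop :=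
  ∀ ε : ℝ, 0 < ε → ∃ δ : ℝ, 0 < δ ∧ ∀ A : Set (Eucl n), A ⊆ S →
    (μH[d] : Measure (Eucl n)) A < ENNReal.ofReal δ →
      (μH[d] : Measure (Eucl m)) (f '' A) < ENNReal.ofReal ε

/-- `f` is locally absolutely continuous on `S` w.r.t. `H^d`. -/
def LocACOnSet {n m : ℕ} (f : Eucl n → Eucl m) (S : Set (Eucl n)) (d : ℝ) : Prop :=
  ∀ x ∈ S, ∃ V ∈ 𝓝 x, ACOnSet f (S ∩ V) d

/-- The Luzin (N)-property of `f` on `S` w.r.t. `d`-dimensional Hausdorff measure. -/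
def LusinNOn {n m : ℕ} (f : Eucl n → Eucl m) (S : Set (Eucl n)) (d : ℝ) : Prop :=
  ∀ A : Set (Eucl n), A ⊆ S → (μH[d] : Measure (Eucl n)) A = 0 →
    (μH[d] : Measure (Eucl m)) (f '' A) = 0

end

section

/-! ### Hausdorff measure versus Lebesgue measure -/

noncomputable def cst (k : ℕ) : ℝ≥0 :=
  Measure.addHaarScalarFactor (μH[(k : ℝ)] : Measure (Eucl k)) volume

instance instHaarEucl (k : ℕ) : Measure.IsAddHaarMeasure (μH[(k : ℝ)] : Measure (Eucl k)) := by
  have h := isAddHaarMeasure_hausdorffMeasure (E := Eucl k)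
  simpa using h

lemma hausdorff_eq_cst (k : ℕ) (s : Set (Eucl k)) :
    (μH[(k : ℝ)] : Measure (Eucl k)) s = cst k * volume s := by
  have h := Measure.isAddLeftInvariant_eq_smul (μH[(k : ℝ)] : Measure (Eucl k)) volume
  calc (μH[(k : ℝ)] : Measure (Eucl k)) s = (cst k • (volume : Measure (Eucl k))) s := by
        rw [cst, ← h]
    _ = _ := by rw [Measure.smul_apply]; rfl

lemma one_le_cst (k : ℕ) : 1 ≤ cst k := by
  have h1 := (PiLp.lipschitzWith_ofLp 2 (fun _ : Fin k => ℝ)).hausdorffMeasure_image_le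
    (d := (k : ℝ)) (by positivity) (WithLp.ofLp ⁻¹' (univ.pi fun _ => Icc (0:ℝ) 1))
  rw [hausdorff_eq_cst, image_preimage_eq _ (WithLp.ofLp_surjective 2)] at h1
  have h2 := hausdorffMeasure_pi_real (ι := Fin k)
  simp only [Fintype.card_fin] at h2
  rw [h2, (PiLp.volume_preserving_ofLp (Fin k)).measure_preimage
    (by exact (MeasurableSet.univ_pi fun _ => measurableSet_Icc).nullMeasurableSet)] at h1
  rw [volume_pi_pi] at h1
  simp at h1
  exact h1

/-! ### splitting off the first coordinate -/

noncomputable def splitE (k : ℕ) : Eucl (k + 1) ≃ᵐ ℝ × Eucl k :=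
  ((MeasurableEquiv.toLp 2 (Fin (k + 1) → ℝ)).symm.trans
    (MeasurableEquiv.piFinSuccAbove (fun _ => ℝ) 0)).trans
    (MeasurableEquiv.prodCongr (MeasurableEquiv.refl ℝ) (MeasurableEquiv.toLp 2 (Fin k → ℝ)))

lemma splitE_mp (k : ℕ) : MeasurePreserving (splitE k) volume volume := by
  have h1 := (EuclideanSpace.volume_preserving_symm_measurableEquiv_toLp (Fin (k + 1)))
  have h2 := volume_preserving_piFinSuccAbove (fun _ : Fin (k + 1) => ℝ) 0
  have h3 : MeasurePreserving (Prod.map id (WithLp.toLp 2))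
      (volume : Measure (ℝ × (Fin k → ℝ))) (volume : Measure (ℝ × Eucl k)) :=
    (MeasurePreserving.id _).prod (PiLp.volume_preserving_toLp (Fin k))
  exact h3.comp (h2.comp h1)

lemma splitE_fst (k : ℕ) (x : Eucl (k + 1)) : (splitE k x).1 = x 0 := rfl

lemma splitE_snd (k : ℕ) (x : Eucl (k + 1)) (j : Fin k) : (splitE k x).2 j = x j.succ := rfl

lemma splitE_norm_sq (k : ℕ) (x : Eucl (k + 1)) :
    ‖x‖ ^ 2 = (splitE k x).1 ^ 2 + ‖(splitE k x).2‖ ^ 2 := by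
  simp only [EuclideanSpace.norm_sq_eq, Fin.sum_univ_succ, splitE_fst, splitE_snd, Real.norm_eq_abs,
    sq_abs]

lemma splitE_sub (k : ℕ) (x y : Eucl (k + 1)) : splitE k (x - y) = splitE k x - splitE k y := rfl
lemma splitE_smul (k : ℕ) (t : ℝ) (x : Eucl (k + 1)) : splitE k (t • x) = t • splitE k x := rfl

noncomputable def e0 (k : ℕ) : Eucl (k + 1) := EuclideanSpace.single 0 1

lemma splitE_e0 (k : ℕ) : splitE k (e0 k) = (1, 0) := by
  ext j
  · simp [splitE_fst, e0]
  · simp [splitE_snd, e0]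

lemma norm_e0 (k : ℕ) : ‖e0 k‖ = 1 := by simp [e0]

lemma splitE_snd_lip (k : ℕ) : LipschitzWith 1 (fun x : Eucl (k + 1) => (splitE k x).2) := by
  refine LipschitzWith.of_dist_le_mul fun x y => ?_
  rw [dist_eq_norm, dist_eq_norm, NNReal.coe_one, one_mul]
  have := splitE_norm_sq k (x - y)
  rw [splitE_sub] at this
  refine le_of_sq_le_sq ?_ (norm_nonneg _)
  rw [this]
  simp only [Prod.snd_sub]
  nlinarith [sq_nonneg (splitE k x - splitE k y).1]

lemma exists_rot (k : ℕ) (v : Eucl (k + 1)) :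
    ∃ g : Eucl (k + 1) ≃ₗᵢ[ℝ] Eucl (k + 1), g v = ‖v‖ • e0 k := by
  refine ⟨(ℝ ∙ (v - ‖v‖ • e0 k))ᗮ.reflection, Submodule.reflection_sub ?_⟩
  rw [norm_smul, norm_e0]; simp

/-! ### the measure of a swept surface -/

lemma crofton_aux (k : ℕ) (l : ℝ) (hl : 0 < l) (S : Set (Eucl (k + 1))) (hS : MeasurableSet S) :
    cst k * volume {z : Eucl (k + 1) | ∃ t ∈ Icc (0:ℝ) l, z + t • e0 k ∈ S} ≤
      ENNReal.ofReal l * (μH[(k : ℝ)] : Measure (Eucl (k + 1))) S := by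
  have key : ∀ h : ℝ, 0 < h →
      cst k * volume {z : Eucl (k + 1) | ∃ t ∈ Icc (0:ℝ) l, z + t • e0 k ∈ S} ≤
      ENNReal.ofReal (l + h) * (μH[(k : ℝ)] : Measure (Eucl (k + 1))) S := by
    intro h hh
    set A : ℤ → Set (Eucl (k + 1)) := fun j => (fun x => x 0) ⁻¹' (Ico (j * h) ((j + 1) * h)) with hA
    have hc0 : Measurable (fun x : Eucl (k + 1) => x 0) :=
      (measurable_fst.comp (splitE k).measurable : _)
    have hAm : ∀ j, MeasurableSet (A j) := fun j => hc0 measurableSet_Ico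
    have hAd : Pairwise (Function.onFun Disjoint A) := by
      intro i j hij
      refine Set.disjoint_left.2 fun x hx hy => hij ?_
      simp only [hA, mem_preimage, mem_Ico] at hx hy
      have h1 : (i : ℝ) < j + 1 := lt_of_mul_lt_mul_right (hx.1.trans_lt hy.2) hh.le
      have h2 : (j : ℝ) < i + 1 := lt_of_mul_lt_mul_right (hy.1.trans_lt hx.2) hh.le
      have h1' : i < j + 1 := by exact_mod_cast h1
      have h2' : j < i + 1 := by exact_mod_cast h2
      omega
    have hAu : ⋃ j, S ∩ A j = S := by
      rw [← inter_iUnion]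
      refine inter_eq_left.2 fun x _ => mem_iUnion.2 ⟨⌊x 0 / h⌋, ?_⟩
      simp only [hA, mem_preimage, mem_Ico]
      constructor
      · rw [← le_div_iff₀ hh]; exact Int.floor_le _
      · rw [← div_lt_iff₀ hh]; exact Int.lt_floor_add_one _
    have hsub : {z : Eucl (k + 1) | ∃ t ∈ Icc (0:ℝ) l, z + t • e0 k ∈ S} ⊆
        ⋃ j : ℤ, splitE k ⁻¹' (Icc (j * h - l) ((j + 1) * h) ×ˢ
          ((fun x : Eucl (k + 1) => (splitE k x).2) '' (S ∩ A j))) := by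
      rintro z ⟨t, ht, hz⟩
      rw [← hAu] at hz
      obtain ⟨j, hj⟩ := mem_iUnion.1 hz
      refine mem_iUnion.2 ⟨j, ?_, z + t • e0 k, hj, ?_⟩
      · have := hj.2
        simp only [hA, mem_preimage, mem_Ico] at this
        have h3 : (z + t • e0 k) 0 = z 0 + t := by simp [e0]
        rw [h3] at this
        rw [splitE_fst]
        exact ⟨by linarith [ht.1, ht.2], by linarith [ht.1, ht.2]⟩
      · ext i
        simp [splitE_snd, e0]
    calc cst k * volume {z : Eucl (k + 1) | ∃ t ∈ Icc (0:ℝ) l, z + t • e0 k ∈ S}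
        ≤ cst k * ∑' j : ℤ, ENNReal.ofReal (l + h) *
            volume ((fun x : Eucl (k + 1) => (splitE k x).2) '' (S ∩ A j)) := by
          gcongr
          refine (measure_mono hsub).trans ((measure_iUnion_le _).trans
            (ENNReal.tsum_le_tsum fun j => ?_))
          rw [(splitE_mp k).measure_preimage_equiv, Measure.volume_eq_prod, Measure.prod_prod,
            Real.volume_Icc]
          apply le_of_eq
          congr 2
          ring
      _ = ENNReal.ofReal (l + h) * ∑' j : ℤ, (μH[(k : ℝ)] : Measure (Eucl k))
            ((fun x : Eucl (k + 1) => (splitE k x).2) '' (S ∩ A j)) := by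
          simp_rw [hausdorff_eq_cst]
          rw [ENNReal.tsum_mul_left, ENNReal.tsum_mul_left]
          ring
      _ ≤ ENNReal.ofReal (l + h) * ∑' j : ℤ, (μH[(k : ℝ)] : Measure (Eucl (k+1))) (S ∩ A j) := by
          gcongr with j
          have := (splitE_snd_lip k).hausdorffMeasure_image_le (d := k) (by positivity) (S ∩ A j)
          simpa using this
      _ = _ := by
          rw [← measure_iUnion _ fun j => hS.inter (hAm j), hAu]
          intro i j hij
          exact (hAd hij).mono inter_subset_right inter_subset_right
  by_cases htop : (μH[(k : ℝ)] : Measure (Eucl (k + 1))) S = ⊤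
  · rw [htop, ENNReal.mul_top (by simpa using hl)]
    exact le_top
  have ht : Tendsto (fun h : ℝ => ENNReal.ofReal (l + h) *
      (μH[(k : ℝ)] : Measure (Eucl (k + 1))) S) (𝓝[>] 0)
      (𝓝 (ENNReal.ofReal (l + 0) * (μH[(k : ℝ)] : Measure (Eucl (k + 1))) S)) := by
    refine ENNReal.Tendsto.mul_const ?_ (Or.inr htop)
    refine ENNReal.tendsto_ofReal ?_
    exact ((continuous_const.add continuous_id).tendsto 0).mono_left nhdsWithin_le_nhds
  rw [add_zero] at ht
  refine ge_of_tendsto ht ?_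
  filter_upwards [self_mem_nhdsWithin] with h hh using key h hh

lemma crofton (k : ℕ) (a b : Eucl (k + 1)) (hab : a ≠ b) (S : Set (Eucl (k + 1)))
    (hS : MeasurableSet S) :
    cst k * volume {z : Eucl (k + 1) | ∃ x ∈ segment ℝ a b, z + x ∈ S} ≤
      ENNReal.ofReal (dist a b) * (μH[(k : ℝ)] : Measure (Eucl (k + 1))) S := by
  obtain ⟨g, hg⟩ := exists_rot k (b - a)
  have hl : 0 < dist a b := dist_pos.2 hab
  have hb : ‖b - a‖ = dist a b := by rw [dist_comm, dist_eq_norm]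
  set T : Set (Eucl (k + 1)) := g.symm ⁻¹' S with hT
  have hTm : MeasurableSet T := g.symm.continuous.measurable hS
  have h1 := crofton_aux k _ hl T hTm
  have h2 : (μH[(k : ℝ)] : Measure (Eucl (k + 1))) T = (μH[(k : ℝ)] : Measure (Eucl (k + 1))) S :=
    g.symm.toIsometryEquiv.hausdorffMeasure_preimage k S
  rw [h2] at h1
  refine le_trans (mul_le_mul_right ?_ _) h1
  have h3 : {z : Eucl (k + 1) | ∃ x ∈ segment ℝ a b, z + x ∈ S} ⊆
      (fun z => z + a) ⁻¹' (g ⁻¹' {z : Eucl (k + 1) | ∃ t ∈ Icc (0:ℝ) (dist a b), z + t • e0 k ∈ T}) := by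
    rintro z ⟨x, hx, hz⟩
    rw [segment_eq_image'] at hx
    obtain ⟨t, ht, rfl⟩ := hx
    refine ⟨t * dist a b, ⟨by have := ht.1; positivity, ?_⟩, ?_⟩
    · have := ht.2; nlinarith
    · simp only [hT, mem_preimage, map_add]
      have : g.symm ((t * dist a b) • e0 k) = t • (b - a) := by
        rw [mul_smul, ← hb, ← hg, map_smul, g.symm_apply_apply]
      rw [this]
      simpa [add_assoc] using hz
  refine (measure_mono (μ := (volume : Measure (Eucl (k + 1)))) h3).trans ?_
  rw [measure_preimage_add_right]
  exact (g.measurePreserving.measure_preimage_equiv (f := g.toMeasurableEquiv) _).le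

end

section
open scoped Pointwise

/-! ### Hausdorff measure on the sphere -/

lemma radial_lip {E : Type*} [NormedAddCommGroup E] [InnerProductSpace ℝ E] (x y : E)
    (hx : 1 ≤ ‖x‖) (hy : 1 ≤ ‖y‖) : ‖‖x‖⁻¹ • x - ‖y‖⁻¹ • y‖ ≤ ‖x - y‖ := by
  have hx0 : 0 < ‖x‖ := by linarith
  have hy0 : 0 < ‖y‖ := by linarith
  refine le_of_sq_le_sq ?_ (norm_nonneg _)
  rw [@norm_sub_sq_real, @norm_sub_sq_real]
  simp only [norm_smul, norm_inv, norm_norm, inner_smul_left, inner_smul_right]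
  simp only [inv_mul_cancel₀ hx0.ne', inv_mul_cancel₀ hy0.ne', conj_trivial]
  have hi := real_inner_le_norm x y
  set a := ‖x‖
  set b := ‖y‖
  set s := ⟪x, y⟫
  have h1 : b⁻¹ * (a⁻¹ * s) = s / (a * b) := by field_simp
  rw [h1]
  have hab : 1 ≤ a * b := by nlinarith
  have h2 : s - s / (a * b) ≤ a * b - 1 := by
    have : s - s / (a * b) = (s / (a * b)) * (a * b - 1) := by field_simp
    rw [this]
    have h3 : s / (a * b) ≤ 1 := by rw [div_le_one (by positivity)]; exact hi
    nlinarith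
  nlinarith [sq_nonneg (a - b)]

noncomputable def gno (k : ℕ) (y : Eucl k) : Eucl (k + 1) :=
  ‖(splitE k).symm (1, y)‖⁻¹ • (splitE k).symm (1, y)

lemma gno_meas (k : ℕ) : Measurable (gno k) := by
  have h : Measurable fun y : Eucl k => (splitE k).symm (1, y) :=
    (splitE k).symm.measurable.comp (measurable_const.prodMk measurable_id)
  exact h.norm.inv.smul h

lemma symm_norm_ge (k : ℕ) (y : Eucl k) : 1 ≤ ‖(splitE k).symm (1, y)‖ := by
  have := splitE_norm_sq k ((splitE k).symm (1, y))
  rw [MeasurableEquiv.apply_symm_apply] at this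
  have h0 := norm_nonneg ((splitE k).symm (1, y))
  nlinarith [sq_nonneg ‖y‖]

lemma gno_lip (k : ℕ) : LipschitzWith 1 (gno k) := by
  refine LipschitzWith.of_dist_le_mul fun x y => ?_
  rw [dist_eq_norm, dist_eq_norm, NNReal.coe_one, one_mul]
  refine (radial_lip _ _ (symm_norm_ge k x) (symm_norm_ge k y)).trans ?_
  have := splitE_norm_sq k ((splitE k).symm (1, x) - (splitE k).symm (1, y))
  rw [splitE_sub, MeasurableEquiv.apply_symm_apply, MeasurableEquiv.apply_symm_apply] at this
  simp at this
  exact this.le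

lemma cap_e0 (k : ℕ) (τ : ℝ) (hτ : 0 < τ) (A : Set (Eucl (k + 1))) (hA : MeasurableSet A)
    (hA1 : ∀ x ∈ A, ‖x‖ = 1) (hA2 : ∀ x ∈ A, τ ≤ x 0) :
    ENNReal.ofReal (τ ^ (k + 1)) * (μH[(k : ℝ)] : Measure (Eucl (k + 1))) A ≤
      cst k * ((k + 1 : ℕ) * volume (Ioo (0:ℝ) 1 • A)) := by
  set G : Set (Eucl k) := gno k ⁻¹' A with hG
  have hGm : MeasurableSet G := gno_meas k hA
  have h1 : (μH[(k : ℝ)] : Measure (Eucl (k + 1))) A ≤ cst k * volume G := by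
    rw [← hausdorff_eq_cst]
    have hsub : A ⊆ gno k '' G := by
      intro x hx
      have hx0 : 0 < x 0 := hτ.trans_le (hA2 x hx)
      have hw : (splitE k).symm (1, (x 0)⁻¹ • (splitE k x).2) = (x 0)⁻¹ • x := by
        rw [MeasurableEquiv.symm_apply_eq, splitE_smul]
        refine Prod.ext ?_ rfl
        simp [splitE_fst, hx0.ne']
      have hgx : gno k ((x 0)⁻¹ • (splitE k x).2) = x := by
        rw [gno, hw, norm_smul, hA1 x hx, smul_smul, norm_inv, Real.norm_of_nonneg hx0.le]
        simp [hx0.ne']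
      exact ⟨(x 0)⁻¹ • (splitE k x).2, by simpa only [hG, mem_preimage, hgx] using hx, hgx⟩
    have := (gno_lip k).hausdorffMeasure_image_le (d := k) (by positivity) G
    simp only [ENNReal.coe_one, ENNReal.one_rpow, one_mul] at this
    exact (measure_mono hsub).trans this
  set H : Set (ℝ × Eucl k) := {q | q.1 ∈ Ioo 0 τ ∧ q.1⁻¹ • q.2 ∈ G} with hH
  have hHm : MeasurableSet H := by
    refine (measurable_fst measurableSet_Ioo).inter ?_
    exact (measurable_fst.inv.smul measurable_snd) hGm
  have h2 : splitE k ⁻¹' H ⊆ Ioo (0:ℝ) 1 • A := by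
    intro z hz
    obtain ⟨⟨hz0, hz1⟩, hzG⟩ := hz
    set s := (splitE k z).1 with hs
    set y := s⁻¹ • (splitE k z).2 with hy
    set w := (splitE k).symm (1, y) with hw
    have hwn : 1 ≤ ‖w‖ := symm_norm_ge k y
    have hzw : z = s • w := by
      apply (splitE k).injective
      rw [splitE_smul, hw, MeasurableEquiv.apply_symm_apply]
      refine Prod.ext ?_ ?_
      · simp [hs]
      · simp [hy, smul_smul, hz0.ne']
    have hgA : gno k y ∈ A := hzG
    have hg0 : τ ≤ ‖w‖⁻¹ := by
      have := hA2 _ hgA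
      have h3 : (gno k y) 0 = ‖w‖⁻¹ := by
        change ‖w‖⁻¹ • (w 0) = _
        have : w 0 = 1 := by rw [← splitE_fst, hw, MeasurableEquiv.apply_symm_apply]
        rw [this]; simp
      rwa [h3] at this
    refine ⟨s * ‖w‖, ⟨by positivity, ?_⟩, gno k y, hgA, ?_⟩
    · rw [← lt_div_iff₀ (by linarith), one_div]; exact hz1.trans_le hg0
    · change (s * ‖w‖) • (‖w‖⁻¹ • w) = z
      have hw0 : ‖w‖ ≠ 0 := by linarith
      rw [smul_smul, mul_assoc, mul_inv_cancel₀ hw0, mul_one, ← hzw]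
  have h3 : volume H = ENNReal.ofReal (τ ^ (k + 1) / (k + 1)) * volume G := by
    rw [Measure.volume_eq_prod, Measure.prod_apply hHm]
    have h4 : ∀ s : ℝ, volume (Prod.mk s ⁻¹' H) =
        (Ioo 0 τ).indicator (fun s => ENNReal.ofReal (s ^ k) * volume G) s := by
      intro s
      by_cases hs : s ∈ Ioo 0 τ
      · rw [indicator_of_mem hs]
        have : Prod.mk s ⁻¹' H = (fun v => s⁻¹ • v) ⁻¹' G := by
          ext v; simp only [hH, mem_preimage, mem_ofPred_eq, hs, true_and]
        rw [this, Measure.addHaar_preimage_smul _ (inv_ne_zero hs.1.ne')]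
        congr 2
        have := hs.1
        rw [abs_of_pos (by positivity)]
        simp
      · rw [indicator_of_notMem hs]
        have : Prod.mk s ⁻¹' H = ∅ := by
          ext v; simp only [hH, mem_preimage, mem_ofPred_eq, hs, false_and, mem_empty_iff_false]
        simp [this]
    simp_rw [h4]
    rw [lintegral_indicator measurableSet_Ioo, lintegral_mul_const _ (by fun_prop)]
    congr 1
    rw [Measure.restrict_congr_set Ioo_ae_eq_Ioc,
      ← ofReal_integral_eq_lintegral_ofReal (intervalIntegral.intervalIntegrable_pow _).1, ← intervalIntegral.integral_of_le hτ.le]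
    · simp
    · filter_upwards [ae_restrict_mem measurableSet_Ioc] with y hy
      exact pow_nonneg hy.1.le _
  have h5 : volume H ≤ volume (Ioo (0:ℝ) 1 • A) := by
    rw [← (splitE_mp k).measure_preimage_equiv]; exact measure_mono h2
  calc ENNReal.ofReal (τ ^ (k + 1)) * (μH[(k : ℝ)] : Measure (Eucl (k + 1))) A
      ≤ ENNReal.ofReal (τ ^ (k + 1)) * (cst k * volume G) := by gcongr
    _ = cst k * ((k + 1 : ℕ) * (ENNReal.ofReal (τ ^ (k + 1) / (k + 1)) * volume G)) := by
        have : ENNReal.ofReal (τ ^ (k + 1)) =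
            ((k + 1 : ℕ) : ℝ≥0∞) * ENNReal.ofReal (τ ^ (k + 1) / (k + 1)) := by
          rw [← ENNReal.ofReal_natCast, ← ENNReal.ofReal_mul (by positivity)]
          congr 1
          push_cast
          field_simp
        rw [this]; ring
    _ ≤ _ := by rw [← h3]; gcongr

lemma cap_e (k : ℕ) (τ : ℝ) (hτ : 0 < τ) (e : Eucl (k + 1)) (he : ‖e‖ = 1)
    (A : Set (Eucl (k + 1))) (hA : MeasurableSet A)
    (hA1 : ∀ x ∈ A, ‖x‖ = 1) (hA2 : ∀ x ∈ A, τ ≤ ⟪e, x⟫) :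
    ENNReal.ofReal (τ ^ (k + 1)) * (μH[(k : ℝ)] : Measure (Eucl (k + 1))) A ≤
      cst k * ((k + 1 : ℕ) * volume (Ioo (0:ℝ) 1 • A)) := by
  obtain ⟨g, hg⟩ := exists_rot k e
  rw [he, one_smul] at hg
  have h := cap_e0 k τ hτ (g.symm ⁻¹' A) (g.symm.continuous.measurable hA)
    (fun x hx => by rw [← hA1 _ hx, LinearIsometryEquiv.norm_map])
    (fun x hx => by
      have h1 := hA2 _ hx
      have h2 : ⟪e, g.symm x⟫ = ⟪e0 k, x⟫ := by
        rw [← g.inner_map_map, hg, g.apply_symm_apply]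
      rw [h2] at h1
      simpa [e0, EuclideanSpace.inner_single_left] using h1)
  have h2 : (μH[(k : ℝ)] : Measure (Eucl (k + 1))) (g.symm ⁻¹' A) =
      (μH[(k : ℝ)] : Measure (Eucl (k + 1))) A :=
    g.symm.toIsometryEquiv.hausdorffMeasure_preimage k A
  have h3 : Ioo (0:ℝ) 1 • (g.symm ⁻¹' A) = g.symm ⁻¹' (Ioo (0:ℝ) 1 • A) := by
    ext x
    simp only [Set.mem_smul, mem_preimage]
    constructor
    · rintro ⟨s, hs, y, hy, rfl⟩
      exact ⟨s, hs, _, hy, by simp⟩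
    · rintro ⟨s, hs, y, hy, hxy⟩
      exact ⟨s, hs, g y, by simpa using hy, by rw [← map_smul, hxy]; simp⟩
  have h4 : volume (g.symm ⁻¹' (Ioo (0:ℝ) 1 • A)) = volume (Ioo (0:ℝ) 1 • A) :=
    g.symm.measurePreserving.measure_preimage_equiv (f := g.symm.toMeasurableEquiv) _
  rw [h2, h3, h4] at h
  exact h

lemma hausdorff_sphere_le_aux (k : ℕ) (h : ℝ) (hh : 0 < h) (h1 : h < 1)
    (A : Set (sphere (0 : Eucl (k + 1)) 1)) (hA : MeasurableSet A) :
    ENNReal.ofReal ((1 - h ^ 2 / 2) ^ (k + 1)) *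
      (μH[(k : ℝ)] : Measure (Eucl (k + 1))) (Subtype.val '' A) ≤
      cst k * (volume : Measure (Eucl (k + 1))).toSphere A := by
  have hne : Nonempty (sphere (0 : Eucl (k + 1)) 1) := ⟨⟨e0 k, by simp [norm_e0]⟩⟩
  set u := TopologicalSpace.denseSeq (sphere (0 : Eucl (k + 1)) 1) with hu
  set B : ℕ → Set (sphere (0 : Eucl (k + 1)) 1) := disjointed fun i => ball (u i) h with hB
  have hBm : ∀ i, MeasurableSet (B i) := fun i =>
    MeasurableSet.disjointed (fun i => measurableSet_ball) i
  have hBd : Pairwise (Function.onFun Disjoint B) := disjoint_disjointed _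
  have hBu : ⋃ i, A ∩ B i = A := by
    rw [← inter_iUnion, hB, iUnion_disjointed]
    refine inter_eq_left.2 fun x _ => ?_
    obtain ⟨i, hi⟩ := (TopologicalSpace.denseRange_denseSeq _).exists_dist_lt x hh
    exact mem_iUnion.2 ⟨i, hi⟩
  have hsb : MeasurableEmbedding (Subtype.val : sphere (0 : Eucl (k + 1)) 1 → Eucl (k + 1)) :=
    MeasurableEmbedding.subtype_coe isClosed_sphere.measurableSet
  calc ENNReal.ofReal ((1 - h ^ 2 / 2) ^ (k + 1)) *
      (μH[(k : ℝ)] : Measure (Eucl (k + 1))) (Subtype.val '' A)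
      ≤ ENNReal.ofReal ((1 - h ^ 2 / 2) ^ (k + 1)) *
          ∑' i, (μH[(k : ℝ)] : Measure (Eucl (k + 1))) (Subtype.val '' (A ∩ B i)) := by
        gcongr
        conv_lhs => rw [← hBu]
        rw [image_iUnion]
        exact measure_iUnion_le _
    _ = ∑' i, ENNReal.ofReal ((1 - h ^ 2 / 2) ^ (k + 1)) *
          (μH[(k : ℝ)] : Measure (Eucl (k + 1))) (Subtype.val '' (A ∩ B i)) := by
        rw [ENNReal.tsum_mul_left]
    _ ≤ ∑' i, cst k * (volume : Measure (Eucl (k + 1))).toSphere (A ∩ B i) := by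
        refine ENNReal.tsum_le_tsum fun i => ?_
        rw [Measure.toSphere_apply' _ (hA.inter (hBm i))]
        have hfr : Module.finrank ℝ (Eucl (k + 1)) = k + 1 := by simp
        rw [hfr]
        have hn : ∀ x : sphere (0 : Eucl (k + 1)) 1, ‖x.1‖ = 1 := fun x => by simp
        refine cap_e k _ (by nlinarith) (u i).1 (hn _) _ (hsb.measurableSet_image.2 (hA.inter (hBm i))) ?_ ?_
        · rintro _ ⟨x, _, rfl⟩; exact hn x
        · rintro _ ⟨x, hx, rfl⟩
          have hd : x ∈ ball (u i) h := disjointed_subset (fun i => ball (u i) h) i hx.2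
          have hd' : ‖(x : Eucl (k + 1)) - u i‖ < h := by
            rw [← dist_eq_norm]; exact hd
          have h5 := @norm_sub_sq_real _ _ _ (x : Eucl (k + 1)) (u i : Eucl (k + 1))
          rw [hn, hn, real_inner_comm] at h5
          nlinarith [norm_nonneg ((x : Eucl (k + 1)) - u i)]
    _ = _ := by
        rw [ENNReal.tsum_mul_left, ← measure_iUnion _ fun i => hA.inter (hBm i), hBu]
        intro i j hij
        exact (hBd hij).mono inter_subset_right inter_subset_right

lemma hausdorff_sphere_le (k : ℕ) (A : Set (sphere (0 : Eucl (k + 1)) 1)) (hA : MeasurableSet A) :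
    (μH[(k : ℝ)] : Measure (Eucl (k + 1))) (Subtype.val '' A) ≤
      cst k * (volume : Measure (Eucl (k + 1))).toSphere A := by
  have h1 := hausdorff_sphere_le_aux k
  have ht : Tendsto (fun h : ℝ => ENNReal.ofReal ((1 - h ^ 2 / 2) ^ (k + 1)) *
      (μH[(k : ℝ)] : Measure (Eucl (k + 1))) (Subtype.val '' A)) (𝓝[>] 0)
      (𝓝 (ENNReal.ofReal ((1 - (0:ℝ) ^ 2 / 2) ^ (k + 1)) *
      (μH[(k : ℝ)] : Measure (Eucl (k + 1))) (Subtype.val '' A))) := by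
    refine ENNReal.Tendsto.mul_const ?_ (Or.inl (by simp))
    refine ENNReal.tendsto_ofReal ?_
    have : Continuous fun h : ℝ => (1 - h ^ 2 / 2) ^ (k + 1) := by fun_prop
    exact (this.tendsto 0).mono_left nhdsWithin_le_nhds
  simp only [ne_eq, OfNat.ofNat_ne_zero, not_false_eq_true, zero_pow, zero_div, sub_zero, one_pow,
    ENNReal.ofReal_one, one_mul] at ht
  refine le_of_tendsto ht ?_
  filter_upwards [Ioo_mem_nhdsGT (zero_lt_one (α := ℝ))] with h hh
  exact h1 h hh.1 hh.2 A hA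

end

section
open scoped Pointwise

/-! ### Polar coordinates -/

lemma polar_vol (k : ℕ) (G : Eucl (k+1) → ℝ≥0∞) (hG : Measurable G) :
    ∫⁻ x, G x = ∫⁻ r in Ioi (0:ℝ), ENNReal.ofReal (r ^ k) *
      ∫⁻ ω : sphere (0 : Eucl (k+1)) 1, G (r • (ω : Eucl (k+1)))
        ∂(volume : Measure (Eucl (k+1))).toSphere := by
  have h1 : ∫⁻ x, G x = ∫⁻ x : ({0}ᶜ : Set (Eucl (k+1))), G x
      ∂((volume : Measure (Eucl (k+1))).comap (↑)) := by
    rw [lintegral_subtype_comap (measurableSet_singleton _).compl, restrict_compl_singleton]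
  have h2 := (volume : Measure (Eucl (k+1))).measurePreserving_homeomorphUnitSphereProd
  have hm : Measurable (fun z : sphere (0 : Eucl (k+1)) 1 × Ioi (0:ℝ) =>
      G ((z.2 : ℝ) • (z.1 : Eucl (k+1)))) := by
    apply hG.comp
    fun_prop
  have h3 := h2.lintegral_comp hm
  have h4 : ∀ x : ({0}ᶜ : Set (Eucl (k+1))),
      G (((homeomorphUnitSphereProd (Eucl (k+1)) x).2 : ℝ) •
        ((homeomorphUnitSphereProd (Eucl (k+1)) x).1 : Eucl (k+1))) = G x := by
    intro x
    congr 1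
    have := homeomorphUnitSphereProd_symm_apply_coe (Eucl (k+1))
      (homeomorphUnitSphereProd (Eucl (k+1)) x)
    rw [← this, Homeomorph.symm_apply_apply]
  simp only [h4] at h3
  rw [h1, h3, lintegral_prod_symm' _ hm, finrank_euclideanSpace_fin, Nat.add_sub_cancel,
    Measure.volumeIoiPow, lintegral_withDensity_eq_lintegral_mul _ (by fun_prop)]
  · rw [← lintegral_subtype_comap measurableSet_Ioi]
    rfl
  · exact hm.lintegral_prod_left'

lemma sph_restrict_le (k : ℕ) :
    (μH[(k:ℝ)] : Measure (Eucl (k+1))).restrict (sphere 0 1) ≤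
      (cst k : ℝ≥0∞) • ((volume : Measure (Eucl (k+1))).toSphere).map Subtype.val := by
  refine Measure.le_iff.2 fun A hA => ?_
  rw [Measure.restrict_apply hA, Measure.smul_apply, Measure.map_apply measurable_subtype_coe hA]
  have := hausdorff_sphere_le k (Subtype.val ⁻¹' A) (measurable_subtype_coe hA)
  rwa [Subtype.image_preimage_coe, inter_comm] at this

instance sph_fin (k : ℕ) :
    IsFiniteMeasure ((μH[(k:ℝ)] : Measure (Eucl (k+1))).restrict (sphere 0 1)) := by
  refine ⟨lt_of_le_of_lt (sph_restrict_le k univ) ?_⟩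
  rw [Measure.smul_apply, Measure.map_apply measurable_subtype_coe MeasurableSet.univ]
  exact ENNReal.mul_lt_top ENNReal.coe_lt_top (measure_lt_top _ _)

lemma sph_scale (k : ℕ) (x₀ : Eucl (k+1)) (r : ℝ) (hr : 0 < r) :
    (μH[(k:ℝ)] : Measure (Eucl (k+1))).restrict (sphere x₀ r) =
      ENNReal.ofReal (r ^ k) • ((μH[(k:ℝ)] : Measure (Eucl (k+1))).restrict (sphere 0 1)).map
        (fun ω => x₀ + r • ω) := by
  have hgm : Measurable (fun ω : Eucl (k+1) => x₀ + r • ω) := by fun_prop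
  ext A hA
  rw [Measure.restrict_apply hA, Measure.smul_apply, Measure.map_apply hgm hA,
    Measure.restrict_apply (hgm hA)]
  have : A ∩ sphere x₀ r = x₀ +ᵥ (r • ((fun ω : Eucl (k+1) => x₀ + r • ω) ⁻¹' A ∩ sphere 0 1)) := by
    ext y
    simp only [mem_vadd_set, mem_smul_set, mem_inter_iff, mem_preimage, mem_sphere_iff_norm,
      vadd_eq_add, sub_zero]
    constructor
    · rintro ⟨h1, h2⟩
      refine ⟨y - x₀, ⟨r⁻¹ • (y - x₀), ⟨?_, ?_⟩, ?_⟩, by simp⟩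
      · rw [smul_inv_smul₀ hr.ne']; simpa using h1
      · rw [norm_smul, h2, norm_inv, Real.norm_of_nonneg hr.le, inv_mul_cancel₀ hr.ne']
      · rw [smul_inv_smul₀ hr.ne']
    · rintro ⟨_, ⟨w, ⟨h1, h2⟩, rfl⟩, rfl⟩
      refine ⟨h1, ?_⟩
      rw [add_sub_cancel_left, norm_smul, h2, Real.norm_of_nonneg hr.le, mul_one]
  have hv : ∀ T : Set (Eucl (k+1)), (μH[(k:ℝ)] : Measure (Eucl (k+1))) (x₀ +ᵥ T) = μH[(k:ℝ)] T :=
    fun T => (IsometryEquiv.addLeft x₀).hausdorffMeasure_image _ T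
  rw [this, hv, Measure.hausdorffMeasure_smul₀ (by positivity) hr.ne']
  rw [NNReal.rpow_natCast, ENNReal.smul_def]
  congr 1
  rw [ENNReal.ofReal_pow hr.le, ENNReal.coe_pow, ← Real.toNNReal_eq_nnnorm_of_nonneg hr.le]
  rfl

lemma sph_int (k : ℕ) (x₀ : Eucl (k+1)) (r : ℝ) (hr : 0 < r) (F : Eucl (k+1) → ℝ≥0∞)
    (hF : Measurable F) :
    ∫⁻ x in sphere x₀ r, F x ∂μH[(k:ℝ)] = ENNReal.ofReal (r ^ k) *
      ∫⁻ ω in sphere 0 1, F (x₀ + r • ω) ∂μH[(k:ℝ)] := by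
  rw [sph_scale k x₀ r hr, lintegral_smul_measure, lintegral_map hF (by fun_prop)]
  rfl

lemma sph_meas (k : ℕ) (x₀ : Eucl (k+1)) (r : ℝ) (hr : 0 < r) :
    (μH[(k:ℝ)] : Measure (Eucl (k+1))) (sphere x₀ r) = ENNReal.ofReal (r ^ k) *
      (μH[(k:ℝ)] : Measure (Eucl (k+1))) (sphere 0 1) := by
  have := sph_int k x₀ r hr (fun _ => 1) measurable_const
  simpa using this

lemma sph_int_meas (k : ℕ) (x₀ : Eucl (k+1)) (F : Eucl (k+1) → ℝ≥0∞) (hF : Measurable F) :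
    Measurable (fun r : ℝ => ENNReal.ofReal (r ^ k) *
      ∫⁻ ω in sphere 0 1, F (x₀ + r • ω) ∂(μH[(k:ℝ)] : Measure (Eucl (k+1)))) := by
  refine Measurable.mul (by fun_prop) ?_
  have hm : Measurable (fun z : ℝ × Eucl (k+1) => F (x₀ + z.1 • z.2)) := hF.comp (by fun_prop)
  exact hm.lintegral_prod_right'

lemma polar_le (k : ℕ) (x₀ : Eucl (k+1)) (a b : ℝ) (ha : 0 ≤ a) (F : Eucl (k+1) → ℝ≥0∞)
    (hF : Measurable F) :
    ∫⁻ r in Ioo a b, ∫⁻ x in sphere x₀ r, F x ∂μH[(k:ℝ)] ≤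
      cst k * ∫⁻ x in ringA x₀ a b, F x := by
  have hring : MeasurableSet (ringA x₀ a b) := by
    unfold ringA
    have hd : Measurable (fun x : Eucl (k+1) => dist x x₀) := by fun_prop
    exact (measurableSet_lt measurable_const hd).inter (measurableSet_lt hd measurable_const)
  set G : Eucl (k+1) → ℝ≥0∞ := fun x => (ringA x₀ a b).indicator F (x₀ + x) with hG
  have hGm : Measurable G := (hF.indicator hring).comp (by fun_prop)
  have e1 : ∫⁻ x in ringA x₀ a b, F x = ∫⁻ x, G x := by
    rw [← lintegral_indicator hring, hG, lintegral_add_left_eq_self]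
  rw [e1, polar_vol k G hGm, ← lintegral_const_mul' _ _ ENNReal.coe_ne_top]
  have hsub : Ioo a b ⊆ Ioi 0 := fun r hr => lt_of_le_of_lt ha hr.1
  refine le_trans ?_ (lintegral_mono_set hsub)
  refine setLIntegral_mono' measurableSet_Ioo fun r hr => ?_
  have hr0 : 0 < r := hsub hr
  rw [sph_int k x₀ r hr0 F hF, mul_left_comm]
  refine mul_le_mul_right ?_ _
  calc ∫⁻ ω in sphere 0 1, F (x₀ + r • ω) ∂μH[(k:ℝ)]
      ≤ ∫⁻ ω, F (x₀ + r • ω) ∂((cst k : ℝ≥0∞) •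
          ((volume : Measure (Eucl (k+1))).toSphere).map Subtype.val) :=
        lintegral_mono' (sph_restrict_le k) le_rfl
    _ = cst k * ∫⁻ ω : sphere (0 : Eucl (k+1)) 1, F (x₀ + r • (ω : Eucl (k+1)))
        ∂(volume : Measure (Eucl (k+1))).toSphere := by
        rw [lintegral_smul_measure, lintegral_map (f := fun a => F (x₀ + r • a)) (hF.comp (by fun_prop))
          measurable_subtype_coe]
        rfl
    _ = _ := by
        congr 1
        refine lintegral_congr fun ω => ?_
        have : ‖(ω : Eucl (k+1))‖ = 1 := by simp
        rw [hG]
        simp only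
        rw [indicator_of_mem]
        simp [ringA, norm_smul, abs_of_pos hr0, hr.1, hr.2]

/-! ### Hölder on spheres -/

lemma holder_sphere {X : Type*} [MeasurableSpace X] (μ : Measure X) (k : ℕ) (hk : 0 < k) (p : ℝ)
    (hp : (k:ℝ) < p) (ρ Q : X → ℝ≥0∞) (hρ : Measurable ρ) (hQ : Measurable Q)
    (hQ0 : ∀ᵐ x ∂μ, Q x ≠ 0) (hQt : ∀ x, Q x ≠ ⊤) (h1 : 1 ≤ ∫⁻ x, ρ x ^ k ∂μ) :
    ((∫⁻ x, Q x ^ ((k:ℝ)/(p-k)) ∂μ) ^ (1 / ((k:ℝ)/(p-k))))⁻¹ ≤ ∫⁻ x, ρ x ^ p / Q x ∂μ := by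
  have hk' : (0:ℝ) < k := by exact_mod_cast hk
  have hpk : 0 < p - k := by linarith
  have hp0 : 0 < p := by linarith
  have hconj : (p / k).HolderConjugate (p / (p - k)) := by
    rw [Real.holderConjugate_iff]
    constructor
    · rw [lt_div_iff₀ hk']; linarith
    · field_simp; ring
  have H := ENNReal.lintegral_mul_le_Lp_mul_Lq μ hconj
    (f := fun x => (ρ x ^ p / Q x) ^ ((k:ℝ)/p)) (g := fun x => Q x ^ ((k:ℝ)/p))
    (((hρ.pow_const p).div hQ).pow_const _).aemeasurable (hQ.pow_const _).aemeasurable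
  have e0 : ∫⁻ x, ρ x ^ k ∂μ = ∫⁻ x, ((fun x => (ρ x ^ p / Q x) ^ ((k:ℝ)/p)) *
      fun x => Q x ^ ((k:ℝ)/p)) x ∂μ := by
    refine lintegral_congr_ae ?_
    filter_upwards [hQ0] with x hx
    simp only [Pi.mul_apply]
    rw [← ENNReal.mul_rpow_of_nonneg _ _ (by positivity), ENNReal.div_mul_cancel hx (hQt x),
      ← ENNReal.rpow_mul, mul_div_cancel₀ _ hp0.ne', ENNReal.rpow_natCast]
  rw [← e0] at H
  have e1 : ∀ x, ((ρ x ^ p / Q x) ^ ((k:ℝ)/p)) ^ (p/k) = ρ x ^ p / Q x := by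
    intro x
    rw [← ENNReal.rpow_mul, show (k:ℝ)/p * (p/k) = 1 by field_simp, ENNReal.rpow_one]
  have e2 : ∀ x, (Q x ^ ((k:ℝ)/p)) ^ (p/(p-k)) = Q x ^ ((k:ℝ)/(p-k)) := by
    intro x
    rw [← ENNReal.rpow_mul, show (k:ℝ)/p * (p/(p-k)) = k/(p-k) by field_simp]
  simp only [e1, e2] at H
  have H2 := h1.trans H
  set A := ∫⁻ x, ρ x ^ p / Q x ∂μ
  set B := ∫⁻ x, Q x ^ ((k:ℝ)/(p-k)) ∂μ
  have H3 : (1:ℝ≥0∞) ^ (p/k) ≤ (A ^ (1/(p/k)) * B ^ (1/(p/(p-k)))) ^ (p/k) :=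
    ENNReal.rpow_le_rpow H2 (by positivity)
  rw [ENNReal.one_rpow, ENNReal.mul_rpow_of_nonneg _ _ (by positivity), ← ENNReal.rpow_mul,
    ← ENNReal.rpow_mul, show 1/(p/k) * (p/(k:ℝ)) = 1 by field_simp,
    show 1/(p/(p-k)) * (p/(k:ℝ)) = 1 / ((k:ℝ)/(p-k)) by field_simp, ENNReal.rpow_one] at H3
  rw [ENNReal.inv_le_iff_le_mul]
  · rwa [mul_comm]
  · intro hA h
    rw [h, mul_zero] at H3
    simp at H3
  · intro hA h; rw [h, zero_mul] at H3; simp at H3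

end

section

lemma preconn_frontier {X : Type*} [TopologicalSpace X] (s u : Set X) (hs : IsPreconnected s)
    (hu : IsOpen u) (h1 : (s ∩ u).Nonempty) (h2 : ¬ s ⊆ u) : (s ∩ frontier u).Nonempty := by
  by_contra hne
  rw [not_nonempty_iff_eq_empty] at hne
  obtain ⟨y, hys, hyu⟩ := not_subset.1 h2
  have hfr : ∀ x ∈ s, x ∉ u → x ∉ closure u := by
    intro x hx hxu hxc
    have : x ∈ s ∩ frontier u := ⟨hx, by rw [hu.frontier_eq]; exact ⟨hxc, hxu⟩⟩
    rw [hne] at this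
    exact this
  obtain ⟨x, _, hxu, hxc⟩ := hs u (closure u)ᶜ hu isClosed_closure.isOpen_compl
    (fun x hx => by by_cases h : x ∈ u; exacts [Or.inl h, Or.inr (hfr x hx h)]) h1
    ⟨y, hys, hfr y hys hyu⟩
  exact hxc (subset_closure hxu)

lemma closedBall_sub {n : ℕ} (D : Set (Eucl n)) (hD : IsOpen D) (x₀ : Eucl n) (hx : x₀ ∈ D)
    (r : ℝ) (hr0 : 0 ≤ r) (hr : ENNReal.ofReal r < EMetric.infEdist x₀ (frontier D)) :
    closedBall x₀ r ⊆ D := by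
  by_contra h
  obtain ⟨y, hy, hyf⟩ := preconn_frontier (closedBall x₀ r) D
    (convex_closedBall x₀ r).isPreconnected hD ⟨x₀, mem_closedBall_self hr0, hx⟩ h
  have := lt_of_lt_of_le hr (infEDist_le_edist_of_mem hyf)
  rw [edist_dist] at this
  rw [mem_closedBall, dist_comm] at hy
  exact absurd this (not_lt.2 (ENNReal.ofReal_le_ofReal hy))

lemma sint_inj {n k : ℕ} (S : Surface n k) (h : InjOn S.toFun S.dom)
    (hm : MeasurableSet (S.toFun '' S.dom)) (ρ : Eucl n → ℝ≥0∞) :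
    S.sint ρ = ∫⁻ y in S.toFun '' S.dom, ρ y ∂μH[(k:ℝ)] := by
  rw [← lintegral_indicator hm]
  unfold Surface.sint
  refine lintegral_congr fun y => ?_
  by_cases hy : y ∈ S.toFun '' S.dom
  · rw [indicator_of_mem hy]
    obtain ⟨x, hx, rfl⟩ := hy
    have : S.dom ∩ S.toFun ⁻¹' {S.toFun x} = {x} := by
      ext z
      simp only [mem_inter_iff, mem_preimage, mem_singleton_iff]
      exact ⟨fun hz => h hz.1 hx hz.2, fun hz => by subst hz; exact ⟨hx, rfl⟩⟩
    simp [Surface.mult, this]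
  · rw [indicator_of_notMem hy]
    have : S.dom ∩ S.toFun ⁻¹' {y} = ∅ := by
      ext z
      simp only [mem_inter_iff, mem_preimage, mem_singleton_iff, mem_empty_iff_false, iff_false]
      exact fun hz => hy ⟨z, hz.1, hz.2⟩
    simp [Surface.mult, this]

lemma exists_surface (k : ℕ) (x₀ : Eucl (k+1)) (r : ℝ) (hr : 0 < r) :
    ∃ S : Surface (k+1) k, S.dom = univ ∧ InjOn S.toFun S.dom ∧
      S.toFun '' S.dom = sphere x₀ r := by
  have e := onePointEquivSphereOfFinrankEq (ι := Fin (k+1)) (V := Eucl k) (by simp)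
  refine ⟨⟨univ, isOpen_univ, fun x => x₀ + r • (e x : Eucl (k+1)), ?_⟩, rfl, ?_, ?_⟩
  · have : Continuous fun x => x₀ + r • (e x : Eucl (k+1)) := by
      have := e.continuous
      fun_prop
    exact this.continuousOn
  · intro x _ y _ h
    simp only [add_right_inj] at h
    exact e.injective (Subtype.ext (smul_right_injective _ hr.ne' h))
  · ext y
    simp only [image_univ, mem_range, mem_sphere_iff_norm]
    constructor
    · rintro ⟨x, rfl⟩
      have : ‖(e x : Eucl (k+1))‖ = 1 := by simpa using (e x).2
      rw [add_sub_cancel_left, norm_smul, this, Real.norm_of_nonneg hr.le, mul_one]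
    · intro h
      have hs : r⁻¹ • (y - x₀) ∈ sphere (0 : Eucl (k+1)) 1 := by
        rw [mem_sphere_iff_norm, sub_zero, norm_smul, h, norm_inv, Real.norm_of_nonneg hr.le,
          inv_mul_cancel₀ hr.ne']
      refine ⟨e.symm ⟨_, hs⟩, ?_⟩
      rw [e.apply_symm_apply, smul_inv_smul₀ hr.ne', add_sub_cancel]

lemma ext_ae (k : ℕ) (hk : 0 < k) (p : ℝ) (hp : (k:ℝ) < p) (D : Set (Eucl (k+1)))
    (x₀ : Eucl (k+1)) (a b : ℝ) (ha : 0 < a)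
    (hD : ∀ r ∈ Ioo a b, sphere x₀ r ⊆ D) (ρ : Eucl (k+1) → ℝ≥0∞)
    (hρ : ρ ∈ extAdm p k (sphereFam D x₀ (Ioo a b))) :
    ∀ᵐ r ∂volume.restrict (Ioo a b), 1 ≤ ∫⁻ x in sphere x₀ r, ρ x ^ k ∂μH[(k:ℝ)] := by
  obtain ⟨hρm, hmod⟩ := hρ
  have hk' : (0:ℝ) < k := by exact_mod_cast hk
  have hpk : 0 < p - k := by linarith
  set g : ℝ → ℝ≥0∞ := fun r => ENNReal.ofReal (r ^ k) *
      ∫⁻ ω in sphere 0 1, ρ (x₀ + r • ω) ^ k ∂(μH[(k:ℝ)] : Measure (Eucl (k+1))) with hg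
  have hgm : Measurable g := sph_int_meas k x₀ (fun x => ρ x ^ k) (hρm.pow_const k)
  have hgi : ∀ r ∈ Ioo a b, ∫⁻ x in sphere x₀ r, ρ x ^ k ∂μH[(k:ℝ)] = g r := fun r hr =>
    sph_int k x₀ r (ha.trans hr.1) (fun x => ρ x ^ k) (hρm.pow_const k)
  set N := {r | g r < 1} ∩ Ioo a b with hN
  have hNm : MeasurableSet N := (measurableSet_lt hgm measurable_const).inter measurableSet_Ioo
  suffices hN0 : volume N = 0 by
    rw [ae_restrict_iff' measurableSet_Ioo]
    have : ∀ᵐ r : ℝ, r ∉ N := measure_eq_zero_iff_ae_notMem.1 hN0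
    filter_upwards [this] with r hr hrI
    rw [hgi r hrI]
    by_contra hlt
    exact hr ⟨not_le.1 hlt, hrI⟩
  set C : ℝ≥0∞ := ENNReal.ofReal (b ^ k) * (μH[(k:ℝ)] : Measure (Eucl (k+1))) (sphere 0 1) with hC
  have hCt : C ≠ ⊤ := by
    refine ENNReal.mul_ne_top ENNReal.ofReal_ne_top ?_
    have := (sph_fin k).measure_univ_lt_top
    rw [Measure.restrict_apply_univ] at this
    exact this.ne
  set κ : ℝ≥0∞ := (C ^ (1 / ((k:ℝ)/(p-k))))⁻¹ with hκ
  have hκ0 : κ ≠ 0 := by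
    rw [hκ, ENNReal.inv_ne_zero]
    exact ENNReal.rpow_ne_top_of_nonneg (by positivity) hCt
  have key : ∀ ρ' ∈ surfAdm k {S ∈ sphereFam D x₀ (Ioo a b) | ¬ 1 ≤ S.sint fun y => ρ y ^ k},
      κ * volume N ≤ cst k * ∫⁻ x, ρ' x ^ p := by
    rintro ρ' ⟨hm', hadm⟩
    calc κ * volume N = ∫⁻ r in N, κ := by rw [setLIntegral_const]
      _ ≤ ∫⁻ r in N, ∫⁻ x in sphere x₀ r, ρ' x ^ p ∂μH[(k:ℝ)] := by
          refine setLIntegral_mono' hNm fun r hr => ?_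
          obtain ⟨S, hSd, hSi, hSim⟩ := exists_surface k x₀ r (ha.trans hr.2.1)
          have hms : MeasurableSet (S.toFun '' S.dom) := by
            rw [hSim]; exact isClosed_sphere.measurableSet
          have h1 := hadm S ⟨⟨r, hr.2, by rw [hSd]; exact univ_nonempty, hSi, by
            rw [hSim]; exact (inter_eq_left.2 (hD r hr.2)).symm⟩, by
            rw [sint_inj S hSi hms, hSim, hgi r hr.2]; exact not_le.2 hr.1⟩
          rw [sint_inj S hSi hms, hSim] at h1
          have h2 := holder_sphere (μH[(k:ℝ)].restrict (sphere x₀ r)) k hk p hp ρ' (fun _ => 1)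
            hm' measurable_const (by simp) (by simp) h1
          simp only [ENNReal.one_rpow, lintegral_const, one_mul, Measure.restrict_apply_univ,
            div_one] at h2
          refine le_trans ?_ h2
          rw [hκ, ENNReal.inv_le_inv]
          refine ENNReal.rpow_le_rpow ?_ (by positivity)
          rw [sph_meas k x₀ r (ha.trans hr.2.1)]
          refine mul_le_mul_left (ENNReal.ofReal_le_ofReal ?_) _
          exact pow_le_pow_left₀ (ha.trans hr.2.1).le hr.2.2.le _
      _ ≤ ∫⁻ r in Ioo a b, ∫⁻ x in sphere x₀ r, ρ' x ^ p ∂μH[(k:ℝ)] :=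
          lintegral_mono_set inter_subset_right
      _ ≤ cst k * ∫⁻ x in ringA x₀ a b, ρ' x ^ p := polar_le k x₀ a b ha.le _ (hm'.pow_const _)
      _ ≤ _ := mul_le_mul_right (setLIntegral_le_lintegral _ _) _
  have h0 : κ * volume N ≤ cst k * surfModulus p k
      {S ∈ sphereFam D x₀ (Ioo a b) | ¬ 1 ≤ S.sint fun y => ρ y ^ k} := by
    unfold surfModulus
    have hc0 : (cst k : ℝ≥0∞) ≠ 0 := by
      have := one_le_cst k
      intro h; rw [ENNReal.coe_eq_zero] at h; rw [h] at this; norm_num at this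
    rw [ENNReal.mul_iInf_of_ne hc0 ENNReal.coe_ne_top]
    refine le_iInf fun ρ' => ?_
    rw [ENNReal.mul_iInf_of_ne hc0 ENNReal.coe_ne_top]
    exact le_iInf fun h => key ρ' h
  erw [hmod] at h0
  rw [mul_zero, nonpos_iff_eq_zero, mul_eq_zero] at h0
  exact h0.resolve_left hκ0

lemma lower_bound (k : ℕ) (hk : 0 < k) (p : ℝ) (hp : (k:ℝ) < p) (D : Set (Eucl (k+1)))
    (x₀ : Eucl (k+1)) (Q : Eucl (k+1) → ℝ≥0∞) (hQ : Measurable Q) (hQ0 : ∀ x ∈ D, Q x ≠ 0)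
    (hQt : ∀ x, Q x ≠ ⊤) (a b : ℝ) (ha : 0 < a)
    (hD : ∀ r ∈ Ioo a b, sphere x₀ r ⊆ D) (ρ : Eucl (k+1) → ℝ≥0∞)
    (hρ : ρ ∈ extAdm p k (sphereFam D x₀ (Ioo a b))) :
    ∫⁻ r in Ioo a b, (sphNorm D x₀ Q ((k:ℝ)/(p-k)) r)⁻¹ ≤
      cst k * ∫⁻ x in ringA x₀ a b, ρ x ^ p / Q x := by
  have hm := hρ.1
  refine le_trans ?_ (polar_le k x₀ a b ha.le _ ((hm.pow_const p).div hQ))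
  refine lintegral_mono_ae ?_
  filter_upwards [ext_ae k hk p hp D x₀ a b ha hD ρ hρ, ae_restrict_mem measurableSet_Ioo]
    with r hr hrI
  have h2 := holder_sphere (μH[(k:ℝ)].restrict (sphere x₀ r)) k hk p hp ρ Q
            hm hQ ?_ hQt hr
  · refine le_trans (le_of_eq ?_) h2
    unfold sphNorm
    rw [inter_eq_right.2 (hD r hrI), Nat.cast_add, Nat.cast_one, add_sub_cancel_right]
  · filter_upwards [ae_restrict_mem isClosed_sphere.measurableSet] with x hx
    exact hQ0 x (hD r hrI hx)

/-- modulus of image family, in terms of sets -/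
noncomputable def setMod (k : ℕ) (s : ℝ) (𝒮 : Set (Set (Eucl (k+1)))) : ℝ≥0∞ :=
  ⨅ σ ∈ {σ : Eucl (k+1) → ℝ≥0∞ | Measurable σ ∧
    ∀ S ∈ 𝒮, 1 ≤ ∫⁻ x in S, σ x ∂μH[(k:ℝ)]}, ∫⁻ x, σ x ^ s

lemma surf_le_setMod (k : ℕ) (hk : 0 < k) (p : ℝ) (D : Set (Eucl (k+1)))
    (x₀ : Eucl (k+1)) (a b : ℝ)
    (hD : ∀ r ∈ Ioo a b, sphere x₀ r ⊆ D) (f : Eucl (k+1) → Eucl (k+1))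
    (hfc : ContinuousOn f D) (hfi : InjOn f D) :
    surfModulus p k (imageFam f (sphereFam D x₀ (Ioo a b))) ≤
      setMod k (p/k) ((fun r => f '' sphere x₀ r) '' Ioo a b) := by
  have hk' : (0:ℝ) < k := by exact_mod_cast hk
  unfold setMod
  refine le_iInf₂ fun σ hσ => ?_
  have e : ∀ x, (σ x ^ (1/(k:ℝ))) ^ k = σ x := by
    intro x
    rw [← ENNReal.rpow_natCast, ← ENNReal.rpow_mul, one_div, inv_mul_cancel₀ hk'.ne',
      ENNReal.rpow_one]
  refine (iInf₂_le (fun x => σ x ^ (1/(k:ℝ))) ⟨hσ.1.pow_const _, ?_⟩).trans (le_of_eq ?_)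
  swap
  · rintro S' ⟨S, ⟨r, hr, -, hSi, hSim⟩, hd, heq⟩
    rw [inter_eq_left.2 (hD r hr)] at hSim
    have him : S'.toFun '' S'.dom = f '' sphere x₀ r := by
      rw [hd, heq.image_eq, image_comp, hSim]
    have hinj : InjOn S'.toFun S'.dom := by
      intro x hx y hy h
      rw [hd] at hx hy
      rw [heq hx, heq hy] at h
      refine hSi hx hy (hfi ?_ ?_ h)
      · exact hD r hr (hSim ▸ mem_image_of_mem _ hx)
      · exact hD r hr (hSim ▸ mem_image_of_mem _ hy)
    rw [sint_inj S' hinj]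
    · rw [him]
      simp only [e]
      exact hσ.2 _ ⟨r, hr, rfl⟩
    · rw [him]
      exact ((isCompact_sphere x₀ r).image_of_continuousOn (hfc.mono (hD r hr))).measurableSet
  · refine lintegral_congr fun x => ?_
    rw [← ENNReal.rpow_mul]
    congr 1
    ring

end

section

/-! ### Curves -/

lemma arc_len {n : ℕ} (γ : ℝ → Eucl n) (s t : ℝ) (hst : s ≤ t) (hγ : ContinuousOn γ (Icc s t)) :
    ENNReal.ofReal (dist (γ s) (γ t)) ≤ (μH[(1:ℝ)] : Measure (Eucl n)) (γ '' Ico s t) := by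
  set g : Eucl n → ℝ := fun y => dist y (γ s) with hg
  have hl : LipschitzWith 1 g := LipschitzWith.dist_left _
  have h1 := hl.hausdorffMeasure_image_le (d := 1) zero_le_one (γ '' Ico s t)
  simp only [ENNReal.coe_one, ENNReal.one_rpow, one_mul] at h1
  refine le_trans ?_ h1
  rw [hausdorffMeasure_real]
  have hsub : Ico 0 (dist (γ s) (γ t)) ⊆ g '' (γ '' Ico s t) := by
    intro v hv
    have hc : ContinuousOn (fun u => g (γ u)) (Icc s t) := by
      exact hl.continuous.comp_continuousOn hγ
    have := intermediate_value_Icc hst hc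
    have hv' : v ∈ Icc (g (γ s)) (g (γ t)) := by
      simp only [hg, dist_self]
      rw [dist_comm (γ t)]
      exact ⟨hv.1, hv.2.le⟩
    obtain ⟨u, hu, huv⟩ := this hv'
    refine ⟨γ u, ⟨u, ⟨hu.1, lt_of_le_of_ne hu.2 ?_⟩, rfl⟩, huv⟩
    rintro rfl
    simp only [hg] at huv
    rw [dist_comm] at huv
    exact absurd hv.2 (by rw [huv]; exact lt_irrefl _)
  refine le_trans ?_ (measure_mono hsub)
  rw [Real.volume_Ico, sub_zero]

lemma arc_meas {n : ℕ} (γ : ℝ → Eucl n) (s t : ℝ) (hγ : ContinuousOn γ (Icc s t)) :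
    MeasurableSet (γ '' Ico s t) := by
  have : Ico s t = ⋃ j : ℕ, Icc s (t - 1 / ((j:ℝ)+1)) := by
    ext x
    simp only [mem_Ico, mem_iUnion, mem_Icc]
    constructor
    · rintro ⟨h1, h2⟩
      obtain ⟨j, hj⟩ := exists_nat_one_div_lt (sub_pos.2 h2)
      exact ⟨j, h1, by linarith⟩
    · rintro ⟨j, h1, h2⟩
      have : 0 < 1 / ((j:ℝ)+1) := by positivity
      exact ⟨h1, by linarith⟩
  rw [this, image_iUnion]
  refine MeasurableSet.iUnion fun j => ?_
  refine (isCompact_Icc.image_of_continuousOn (hγ.mono (Icc_subset_Icc_right ?_))).measurableSet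
  have : 0 < 1 / ((j:ℝ)+1) := by positivity
  linarith

lemma curve_sum {n : ℕ} (γ : ℝ → Eucl n) (hγ : ContinuousOn γ (Icc 0 1)) (N : ℕ) (hN : 0 < N)
    (m : ℕ → ℝ≥0∞) (ρ : Eucl n → ℝ≥0∞)
    (hm : ∀ i < N, ∀ t ∈ Icc ((i:ℝ)/N) (((i+1:ℕ):ℝ)/N), m i ≤ ρ (γ t)) :
    ∑ i ∈ Finset.range N, ENNReal.ofReal (dist (γ ((i:ℝ)/N)) (γ (((i+1:ℕ):ℝ)/N))) * m i
      ≤ curveInt γ ρ := by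
  have hN' : (0:ℝ) < N := by exact_mod_cast hN
  set T : ℕ → Set ℝ := fun i => Ico ((i:ℝ)/N) (((i+1:ℕ):ℝ)/N) with hT
  have hle : ∀ i : ℕ, (i:ℝ)/N ≤ ((i+1:ℕ):ℝ)/N := fun i => by gcongr; simp
  have hsub : ∀ i < N, Icc ((i:ℝ)/N) (((i+1:ℕ):ℝ)/N) ⊆ Icc 0 1 := by
    intro i hi
    refine Icc_subset_Icc (by positivity) ?_
    rw [div_le_one hN']
    exact_mod_cast hi
  have hmeas : ∀ i < N, MeasurableSet (γ '' T i) := fun i hi => arc_meas γ _ _ (hγ.mono (hsub i hi))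
  calc ∑ i ∈ Finset.range N, ENNReal.ofReal (dist (γ ((i:ℝ)/N)) (γ (((i+1:ℕ):ℝ)/N))) * m i
      ≤ ∑ i ∈ Finset.range N, ∫⁻ y, (γ '' T i).indicator (fun _ => m i) y ∂μH[(1:ℝ)] := by
        refine Finset.sum_le_sum fun i hi => ?_
        have hi := Finset.mem_range.1 hi
        rw [lintegral_indicator_const (hmeas i hi), mul_comm]
        exact mul_le_mul_right (arc_len γ _ _ (hle i) (hγ.mono (hsub i hi))) _
    _ = ∫⁻ y, ∑ i ∈ Finset.range N, (γ '' T i).indicator (fun _ => m i) y ∂μH[(1:ℝ)] := by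
        rw [lintegral_finsetSum']
        intro i hi
        exact (measurable_const.indicator (hmeas i (Finset.mem_range.1 hi))).aemeasurable
    _ ≤ curveInt γ ρ := by
        unfold curveInt
        refine lintegral_mono fun y => ?_
        set I := (Finset.range N).filter (fun i => y ∈ γ '' T i) with hI
        have h1 : ∑ i ∈ Finset.range N, (γ '' T i).indicator (fun _ => m i) y ≤
            ∑ i ∈ I, ρ y := by
          rw [hI, Finset.sum_filter]
          refine Finset.sum_le_sum fun i hi => ?_
          by_cases hy : y ∈ γ '' T i
          · rw [indicator_of_mem hy, if_pos hy]
            obtain ⟨t, ht, rfl⟩ := hy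
            exact hm i (Finset.mem_range.1 hi) t (Ico_subset_Icc_self ht)
          · rw [indicator_of_notMem hy, if_neg hy]
        refine h1.trans ?_
        rw [Finset.sum_const, nsmul_eq_mul, mul_comm]
        refine mul_le_mul_right ?_ _
        have hex : ∀ i ∈ I, ∃ t ∈ T i, γ t = y := fun i hi => (Finset.mem_filter.1 hi).2
        choose! τ hτ1 hτ2 using hex
        have hinj : InjOn τ (I : Set ℕ) := by
          have aux : ∀ i ∈ I, ∀ j ∈ I, i < j → τ i < τ j := by
            intro i hi j hj hij
            have h1 := (hτ1 i hi).2
            have h2 := (hτ1 j hj).1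
            refine lt_of_lt_of_le h1 (le_trans ?_ h2)
            gcongr
            exact hij
          intro i hi j hj h
          rcases lt_trichotomy i j with h' | h' | h'
          · exact absurd h (aux i hi j hj h').ne
          · exact h'
          · exact absurd h (aux j hj i hi h').ne'
        have h2 : (I : Set ℕ).encard ≤ {t ∈ Icc (0:ℝ) 1 | γ t = y}.encard := by
          rw [← hinj.encard_image]
          refine encard_le_encard ?_
          rintro _ ⟨i, hi, rfl⟩
          exact ⟨hsub i (Finset.mem_range.1 (Finset.mem_filter.1 hi).1)
            (Ico_subset_Icc_self (hτ1 i hi)), hτ2 i hi⟩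
        rw [encard_coe_eq_coe_finsetCard] at h2
        unfold curveMult
        have h3 : (((I.card : ℕ∞)) : ℝ≥0∞) ≤ (({t ∈ Icc (0:ℝ) 1 | γ t = y}.encard : ℕ∞) : ℝ≥0∞) :=
          ENat.toENNReal_le.2 h2
        simpa using h3

/-! ### Crossing -/

/-- the separation property used in the duality argument -/
def Crosses (k : ℕ) (A B : Set (Eucl (k+1))) (ε : ℝ) (S : Set (Eucl (k+1))) : Prop :=
  MeasurableSet S ∧ ∃ U, IsOpen U ∧ frontier U ⊆ S ∧ (∀ y ∈ A, ∀ z ∈ ball 0 ε, z + y ∈ U) ∧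
    (∀ y ∈ B, ∀ z ∈ ball 0 ε, z + y ∉ U)

lemma crossing {k : ℕ} {A B : Set (Eucl (k+1))} {ε : ℝ} {S : Set (Eucl (k+1))}
    (hS : Crosses k A B ε S) (N : ℕ) (a : ℕ → Eucl (k+1)) (h0 : a 0 ∈ A) (hN : a N ∈ B)
    (z : Eucl (k+1)) (hz : z ∈ ball 0 ε) :
    ∃ i < N, a i ≠ a (i+1) ∧ ∃ x ∈ segment ℝ (a i) (a (i+1)), z + x ∈ S := by
  obtain ⟨-, U, hU, hfr, hA, hB⟩ := hS
  have : ∃ i < N, z + a i ∈ U ∧ z + a (i+1) ∉ U := by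
    by_contra hne
    push Not at hne
    have : ∀ i ≤ N, z + a i ∈ U := by
      intro i
      induction i with
      | zero => intro _; exact hA _ h0 z hz
      | succ j ih => intro hj; exact hne j hj (ih (by omega))
    exact hB _ hN z hz (this N le_rfl)
  obtain ⟨i, hi, h1, h2⟩ := this
  refine ⟨i, hi, fun h => h2 (h ▸ h1), ?_⟩
  have hconn : IsPreconnected ((fun x => z + x) '' segment ℝ (a i) (a (i+1))) :=
    (convex_segment _ _).isPreconnected.image _ (by fun_prop)
  obtain ⟨_, ⟨x, hx, rfl⟩, hxf⟩ := preconn_frontier _ U hconn hU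
    ⟨_, ⟨_, left_mem_segment ℝ _ _, rfl⟩, h1⟩ (fun h => h2 (h ⟨_, right_mem_segment ℝ _ _, rfl⟩))
  exact ⟨x, hx, hfr hxf⟩

lemma chain_est {k : ℕ} {A B : Set (Eucl (k+1))} {ε : ℝ} {S : Set (Eucl (k+1))}
    (hS : Crosses k A B ε S) (N : ℕ) (a : ℕ → Eucl (k+1)) (h0 : a 0 ∈ A) (hN : a N ∈ B)
    (η : ℝ) (hη : ∀ i < N, dist (a i) (a (i+1)) < η) :
    cst k * volume (ball (0 : Eucl (k+1)) ε) ≤ ∑ i ∈ Finset.range N,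
      ENNReal.ofReal (dist (a i) (a (i+1))) *
        (μH[(k:ℝ)] : Measure (Eucl (k+1))) (S ∩ ball (a i) (ε + η)) := by
  set I := (Finset.range N).filter (fun i => a i ≠ a (i+1)) with hI
  have hsub : ball (0 : Eucl (k+1)) ε ⊆ ⋃ i ∈ I,
      {z | ∃ x ∈ segment ℝ (a i) (a (i+1)), z + x ∈ S ∩ ball (a i) (ε + η)} := by
    intro z hz
    obtain ⟨i, hi, hne, x, hx, hzx⟩ := crossing hS N a h0 hN z hz
    refine mem_iUnion₂.2 ⟨i, Finset.mem_filter.2 ⟨Finset.mem_range.2 hi, hne⟩, x, hx, hzx, ?_⟩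
    have hxd : dist x (a i) ≤ dist (a i) (a (i+1)) := by
      have := (convex_closedBall (a i) (dist (a i) (a (i+1)))).segment_subset
        (mem_closedBall_self dist_nonneg) (by rw [mem_closedBall, dist_comm]) hx
      exact this
    rw [mem_ball_zero_iff] at hz
    rw [mem_ball]
    calc dist (z + x) (a i) ≤ dist (z + x) x + dist x (a i) := dist_triangle _ _ _
      _ = ‖z‖ + dist x (a i) := by rw [dist_eq_norm, add_sub_cancel_right]
      _ < _ := by linarith [hη i hi]
  calc cst k * volume (ball (0 : Eucl (k+1)) ε)
      ≤ cst k * ∑ i ∈ I, volume {z | ∃ x ∈ segment ℝ (a i) (a (i+1)),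
          z + x ∈ S ∩ ball (a i) (ε + η)} :=
        mul_le_mul_right ((measure_mono hsub).trans (measure_biUnion_finset_le _ _)) _
    _ = ∑ i ∈ I, cst k * volume {z | ∃ x ∈ segment ℝ (a i) (a (i+1)),
          z + x ∈ S ∩ ball (a i) (ε + η)} := Finset.mul_sum _ _ _
    _ ≤ ∑ i ∈ I, ENNReal.ofReal (dist (a i) (a (i+1))) *
        (μH[(k:ℝ)] : Measure (Eucl (k+1))) (S ∩ ball (a i) (ε + η)) :=
        Finset.sum_le_sum fun i hi => crofton k _ _ (Finset.mem_filter.1 hi).2 _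
          (hS.1.inter measurableSet_ball)
    _ ≤ _ := Finset.sum_le_sum_of_subset (Finset.filter_subset _ _)

end

section

/-! ### Duality -/

/-- admissible weights for a family of sets -/
def setAdm (k : ℕ) (𝒮 : Set (Set (Eucl (k+1)))) : Set (Eucl (k+1) → ℝ≥0∞) :=
  {σ | Measurable σ ∧ ∀ S ∈ 𝒮, 1 ≤ ∫⁻ x in S, σ x ∂μH[(k:ℝ)]}

lemma setMod_le {k : ℕ} {s : ℝ} {𝒮 : Set (Set (Eucl (k+1)))} {σ : Eucl (k+1) → ℝ≥0∞}
    (hσ : σ ∈ setAdm k 𝒮) : setMod k s 𝒮 ≤ ∫⁻ x, σ x ^ s := iInf₂_le σ hσ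

lemma tangent_real (s : ℝ) (hs : 1 < s) (x b : ℝ) (hx : 0 ≤ x) (hb : 0 ≤ b) :
    b ^ s + s * b ^ (s-1) * (x - b) ≤ x ^ s := by
  rcases hb.eq_or_lt with rfl | hb
  · rw [Real.zero_rpow (by linarith), Real.zero_rpow (by linarith)]
    simp; positivity
  · have h := one_add_mul_self_le_rpow_one_add (s := x / b - 1) (by
      have : 0 ≤ x / b := by positivity
      linarith) hs.le
    rw [show 1 + (x / b - 1) = x / b by ring, Real.div_rpow hx hb.le] at h
    rw [le_div_iff₀ (by positivity)] at h
    refine le_trans (le_of_eq ?_) h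
    rw [Real.rpow_sub_one hb.ne']
    field_simp

lemma tangent (s t : ℝ) (hs : 1 < s) (ht0 : 0 < t) (ht1 : t < 1) (x y : ℝ≥0∞) (hy : y ≠ ⊤) :
    (ENNReal.ofReal (1-t) * x + ENNReal.ofReal t * y) ^ s + ENNReal.ofReal (s * t) *
      ((ENNReal.ofReal (1-t) * x + ENNReal.ofReal t * y) ^ (s-1) * x) ≤ x ^ s +
      ENNReal.ofReal (s * t) *
      ((ENNReal.ofReal (1-t) * x + ENNReal.ofReal t * y) ^ (s-1) * y) := by
  by_cases hx : x = ⊤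
  · rw [hx, ENNReal.top_rpow_of_pos (by linarith), top_add]; exact le_top
  lift x to ℝ≥0 using hx
  lift y to ℝ≥0 using hy
  have e : ENNReal.ofReal (1-t) * x + ENNReal.ofReal t * y
      = ENNReal.ofReal ((1-t) * x + t * y) := by
    rw [ENNReal.ofReal_add (by have := x.2; have : 0 ≤ 1 - t := by linarith
                               positivity) (by positivity),
      ENNReal.ofReal_mul (by linarith), ENNReal.ofReal_mul ht0.le, ENNReal.ofReal_coe_nnreal,
      ENNReal.ofReal_coe_nnreal]
  have h1t : 0 ≤ 1 - t := by linarith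
  have hb : 0 ≤ (1-t) * x + t * y := by positivity
  rw [e, ENNReal.ofReal_rpow_of_nonneg hb (by linarith),
    ENNReal.ofReal_rpow_of_nonneg hb (by linarith), ← ENNReal.ofReal_coe_nnreal (p := x),
    ← ENNReal.ofReal_coe_nnreal (p := y), ENNReal.ofReal_rpow_of_nonneg x.coe_nonneg (by linarith),
    ← ENNReal.ofReal_mul (by positivity), ← ENNReal.ofReal_mul (by positivity),
    ← ENNReal.ofReal_mul (by positivity), ← ENNReal.ofReal_mul (by positivity),
    ← ENNReal.ofReal_add (by positivity) (by positivity),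
    ← ENNReal.ofReal_add (by positivity) (by positivity)]
  refine ENNReal.ofReal_le_ofReal ?_
  have h := tangent_real s hs x ((1-t) * x + t * y) x.coe_nonneg hb
  nlinarith [h]

lemma variational (k : ℕ) (s : ℝ) (hs : 1 < s) (𝒮 : Set (Set (Eucl (k+1))))
    (hJ : setMod k s 𝒮 ≠ ⊤) (t : ℝ) (ht0 : 0 < t) (ht1 : t < 1)
    (σ : Eucl (k+1) → ℝ≥0∞) (hσ : σ ∈ setAdm k 𝒮)
    (hσJ : ∫⁻ x, σ x ^ s ≤ setMod k s 𝒮 + ENNReal.ofReal (s * t * t) * setMod k s 𝒮)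
    (σ' : Eucl (k+1) → ℝ≥0∞) (hσ' : σ' ∈ setAdm k 𝒮) (hfin : ∀ x, σ' x ≠ ⊤) :
    ENNReal.ofReal ((1-t) ^ (s-1) - t) * setMod k s 𝒮 ≤
      ∫⁻ x, (ENNReal.ofReal (1-t) * σ x + ENNReal.ofReal t * σ' x) ^ (s-1) * σ' x := by
  set J := setMod k s 𝒮 with hJd
  have hm := hσ.1
  have hm' := hσ'.1
  set b : Eucl (k+1) → ℝ≥0∞ := fun x => ENNReal.ofReal (1-t) * σ x + ENNReal.ofReal t * σ' x
    with hb
  have hbm : Measurable b := by fun_prop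
  have hbadm : b ∈ setAdm k 𝒮 := by
    refine ⟨hbm, fun S hS => ?_⟩
    rw [hb, lintegral_add_left (by fun_prop), lintegral_const_mul _ hm, lintegral_const_mul _ hm']
    calc (1:ℝ≥0∞) = ENNReal.ofReal (1-t) * 1 + ENNReal.ofReal t * 1 := by
          rw [mul_one, mul_one, ← ENNReal.ofReal_add (by linarith) ht0.le]; simp
      _ ≤ _ := add_le_add (mul_le_mul_right (hσ.2 S hS) _) (mul_le_mul_right (hσ'.2 S hS) _)
  have hint : ∫⁻ x, (b x ^ s + ENNReal.ofReal (s * t) * (b x ^ (s-1) * σ x)) ≤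
      ∫⁻ x, (σ x ^ s + ENNReal.ofReal (s * t) * (b x ^ (s-1) * σ' x)) :=
    lintegral_mono fun x => tangent s t hs ht0 ht1 (σ x) (σ' x) (hfin x)
  rw [lintegral_add_left (by fun_prop), lintegral_add_left (by fun_prop),
    lintegral_const_mul _ (by fun_prop), lintegral_const_mul _ (by fun_prop)] at hint
  have h1 : J ≤ ∫⁻ x, b x ^ s := setMod_le hbadm
  have h2 : ENNReal.ofReal ((1-t) ^ (s-1)) * J ≤ ∫⁻ x, b x ^ (s-1) * σ x := by
    calc ENNReal.ofReal ((1-t) ^ (s-1)) * J ≤ ENNReal.ofReal ((1-t) ^ (s-1)) * ∫⁻ x, σ x ^ s :=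
          mul_le_mul_right (setMod_le hσ) _
      _ = ∫⁻ x, ENNReal.ofReal ((1-t) ^ (s-1)) * σ x ^ s := by
          rw [lintegral_const_mul _ (by fun_prop)]
      _ ≤ _ := by
          refine lintegral_mono fun x => ?_
          have : σ x ^ s = σ x ^ (s-1) * σ x := by
            conv_rhs => rw [← ENNReal.rpow_one (σ x), ← ENNReal.rpow_mul, one_mul]
            rw [← ENNReal.rpow_add_of_nonneg _ _ (by linarith) (by linarith)]
            simp
          rw [this, ← mul_assoc, ← ENNReal.ofReal_rpow_of_nonneg (by linarith) (by linarith),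
            ← ENNReal.mul_rpow_of_nonneg _ _ (by linarith)]
          refine mul_le_mul_left (ENNReal.rpow_le_rpow ?_ (by linarith)) _
          exact le_self_add
  set X := ∫⁻ x, b x ^ (s-1) * σ' x with hX
  have h3 : J + ENNReal.ofReal (s*t) * (ENNReal.ofReal ((1-t) ^ (s-1)) * J) ≤
      J + ENNReal.ofReal (s*t) * (ENNReal.ofReal t * J + X) := by
    refine (add_le_add h1 (mul_le_mul_right h2 _)).trans (hint.trans ?_)
    rw [mul_add, ← add_assoc, ← mul_assoc, ← ENNReal.ofReal_mul (by positivity)]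
    exact add_le_add hσJ le_rfl
  have h4 := (ENNReal.add_le_add_iff_left hJ).1 h3
  have hst : ENNReal.ofReal (s * t) ≠ 0 := by
    rw [Ne, ENNReal.ofReal_eq_zero, not_le]; positivity
  have h5 := (ENNReal.mul_le_mul_iff_right hst ENNReal.ofReal_ne_top).1 h4
  rw [ENNReal.ofReal_sub _ ht0.le, ENNReal.sub_mul (fun _ _ => hJ)]
  exact tsub_le_iff_left.2 h5

lemma avg_contract (n : ℕ) (g : Eucl n → ℝ≥0∞) (hg : Measurable g) (R : ℝ) (s q : ℝ)
    (hsq : s.HolderConjugate q) :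
    ∫⁻ y, (∫⁻ x in ball y R, g x) ^ q ≤ volume (ball (0 : Eucl n) R) ^ q * ∫⁻ x, g x ^ q := by
  have hq1 : 1 < q := hsq.symm.lt
  set W := volume (ball (0 : Eucl n) R) with hW
  have hWt : W ≠ ⊤ := measure_ball_lt_top.ne
  have hvol : ∀ y : Eucl n, volume (ball y R) = W := fun y => Measure.addHaar_ball_center _ y R
  have h1 : ∀ y, (∫⁻ x in ball y R, g x) ^ q ≤ W ^ (q-1) * ∫⁻ x in ball y R, g x ^ q := by
    intro y
    have H := ENNReal.lintegral_mul_le_Lp_mul_Lq (volume.restrict (ball y R)) hsq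
      (f := fun _ => 1) (g := g) aemeasurable_const hg.aemeasurable
    simp only [Pi.mul_apply, one_mul, ENNReal.one_rpow, lintegral_const, Measure.restrict_apply_univ,
      hvol] at H
    refine (ENNReal.rpow_le_rpow H (by linarith)).trans (le_of_eq ?_)
    rw [ENNReal.mul_rpow_of_nonneg _ _ (by linarith), ← ENNReal.rpow_mul, ← ENNReal.rpow_mul,
      one_div_mul_cancel (by linarith), ENNReal.rpow_one]
    congr 2
    have := hsq.symm.sub_one_mul_conj
    have hs0 := hsq.pos
    field_simp
    linarith
  have hmeas : MeasurableSet {z : Eucl n × Eucl n | dist z.2 z.1 < R} :=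
    measurableSet_lt (by fun_prop) measurable_const
  have hF : Measurable (fun z : Eucl n × Eucl n =>
      {z : Eucl n × Eucl n | dist z.2 z.1 < R}.indicator (fun z => g z.2 ^ q) z) :=
    Measurable.indicator (by fun_prop) hmeas
  have h2 : ∫⁻ y, ∫⁻ x in ball y R, g x ^ q = W * ∫⁻ x, g x ^ q := by
    have e1 : ∀ y, ∫⁻ x in ball y R, g x ^ q = ∫⁻ x,
        {z : Eucl n × Eucl n | dist z.2 z.1 < R}.indicator (fun z => g z.2 ^ q) (y, x) := by
      intro y
      rw [← lintegral_indicator measurableSet_ball]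
      rfl
    simp only [e1]
    rw [lintegral_lintegral_swap hF.aemeasurable, ← lintegral_const_mul _ (by fun_prop)]
    refine lintegral_congr fun x => ?_
    have e2 : ∀ y, {z : Eucl n × Eucl n | dist z.2 z.1 < R}.indicator (fun z => g z.2 ^ q) (y, x)
        = (ball x R).indicator (fun _ => g x ^ q) y := by
      intro y
      simp only [indicator, mem_ball, mem_ofPred_eq, dist_comm]
    simp only [e2]
    rw [lintegral_indicator_const measurableSet_ball, hvol, mul_comm]
  calc ∫⁻ y, (∫⁻ x in ball y R, g x) ^ q ≤ ∫⁻ y, W ^ (q-1) * ∫⁻ x in ball y R, g x ^ q :=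
        lintegral_mono h1
    _ = W ^ (q-1) * (W * ∫⁻ x, g x ^ q) := by
        rw [lintegral_const_mul' _ _ (ENNReal.rpow_ne_top_of_nonneg (by linarith) hWt), h2]
    _ = _ := by
        rw [← mul_assoc]
        congr 1
        conv_lhs => rw [← ENNReal.rpow_one W, ← ENNReal.rpow_mul, one_mul]
        rw [← ENNReal.rpow_add_of_nonneg _ _ (by linarith) (by linarith)]
        simp

end

section

lemma curveInt_mono {n : ℕ} (γ : ℝ → Eucl n) {ρ ρ' : Eucl n → ℝ≥0∞} (h : ∀ y, ρ y ≤ ρ' y) :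
    curveInt γ ρ ≤ curveInt γ ρ' :=
  lintegral_mono fun y => mul_le_mul_left (h y) _

lemma exists_partition {n : ℕ} (γ : ℝ → Eucl n) (hγ : ContinuousOn γ (Icc 0 1)) (η : ℝ)
    (hη : 0 < η) : ∃ N : ℕ, 0 < N ∧ ∀ i < N, ∀ t ∈ Icc ((i:ℝ)/N) (((i+1:ℕ):ℝ)/N),
      dist (γ ((i:ℝ)/N)) (γ t) < η := by
  have hu := isCompact_Icc.uniformContinuousOn_of_continuous hγ
  rw [Metric.uniformContinuousOn_iff] at hu
  obtain ⟨δ, hδ, h⟩ := hu η hη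
  obtain ⟨N, hN⟩ := exists_nat_one_div_lt hδ
  refine ⟨N+1, by omega, fun i hi t ht => ?_⟩
  have hN' : (0:ℝ) < ((N+1:ℕ):ℝ) := by positivity
  have h1 : ((i+1:ℕ):ℝ)/((N+1:ℕ):ℝ) = (i:ℝ)/((N+1:ℕ):ℝ) + 1/((N:ℝ)+1) := by
    push_cast; ring
  have h2 : ((i+1:ℕ):ℝ)/((N+1:ℕ):ℝ) ≤ 1 := by
    rw [div_le_one hN']; exact_mod_cast hi
  have h3 : 0 ≤ (i:ℝ)/((N+1:ℕ):ℝ) := by positivity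
  refine h _ ⟨h3, ?_⟩ _ ⟨h3.trans ht.1, ht.2.trans h2⟩ ?_
  · exact (ht.1.trans ht.2).trans h2
  · rw [Real.dist_eq, abs_sub_comm, abs_of_nonneg (by linarith [ht.1])]
    linarith [ht.2]

lemma curve_adm (k : ℕ) (A B G : Set (Eucl (k+1))) (ε M η δ : ℝ) (hε : 0 < ε) (hη : 0 < η)
    (hηε : η ≤ ε) (hδ : 0 < δ) (𝒮 : Set (Set (Eucl (k+1))))
    (hC : ∀ S ∈ 𝒮, Crosses k A B ε S) (hM : ∀ S ∈ 𝒮, S ⊆ ball 0 M)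
    (W : ℝ≥0∞) (hW : W = cst k * volume (ball (0 : Eucl (k+1)) ε))
    (ρ0 : Eucl (k+1) → ℝ≥0∞) (hρ0 : Measurable ρ0) (K : ℝ≥0∞) (hK0 : K ≠ 0) (hKt : K ≠ ⊤)
    (H : ∀ σ' ∈ setAdm k 𝒮, (∀ x, σ' x ≤ (ball 0 M).indicator
      (fun _ => (ENNReal.ofReal δ * W)⁻¹) x) → K ≤ ∫⁻ x, ρ0 x * σ' x)
    (γ : ℝ → Eucl (k+1)) (hγ : γ ∈ curveJoin A B G) :
    1 ≤ curveInt γ (fun y => (K * W)⁻¹ * (∫⁻ x in ball y (ε + 2*η), ρ0 x) +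
      (ball 0 (M + 3*ε)).indicator (fun _ => ENNReal.ofReal δ) y) := by
  obtain ⟨hγc, hγA, hγB, -⟩ := hγ
  by_contra hlt
  rw [not_le] at hlt
  have hδ0 : ENNReal.ofReal δ ≠ 0 := by rw [Ne, ENNReal.ofReal_eq_zero, not_le]; exact hδ
  have hW0 : W ≠ 0 := by
    rw [hW]
    refine mul_ne_zero ?_ (measure_ball_pos _ _ hε).ne'
    have := one_le_cst k
    intro h; rw [ENNReal.coe_eq_zero] at h; rw [h] at this; norm_num at this
  have hWt : W ≠ ⊤ := by
    rw [hW]; exact ENNReal.mul_ne_top ENNReal.coe_ne_top measure_ball_lt_top.ne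
  obtain ⟨N, hN, hosc⟩ := exists_partition γ hγc η hη
  have hN' : (0:ℝ) < N := by exact_mod_cast hN
  set a : ℕ → Eucl (k+1) := fun i => γ ((i:ℝ)/N) with ha
  have ha0 : a 0 ∈ A := by simpa [ha] using hγA
  have haN : a N ∈ B := by simp only [ha]; rw [div_self hN'.ne']; exact hγB
  have hle : ∀ i : ℕ, (i:ℝ)/N ≤ ((i+1:ℕ):ℝ)/N := fun i => by gcongr; simp
  have hstep : ∀ i < N, dist (a i) (a (i+1)) < η := fun i hi =>
    hosc i hi _ (right_mem_Icc.2 (hle i))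
  set d : ℕ → ℝ≥0∞ := fun i => ENNReal.ofReal (dist (a i) (a (i+1))) with hd
  -- total length near the big ball
  have hlen : ∑ i ∈ Finset.range N, d i * (if a i ∈ ball (0 : Eucl (k+1)) (M + ε + η)
      then ENNReal.ofReal δ else 0) ≤ 1 := by
    refine (curve_sum γ hγc N hN _ ((ball 0 (M + 3*ε)).indicator (fun _ => ENNReal.ofReal δ))
      ?_).trans ((curveInt_mono γ ?_).trans hlt.le)
    · intro i hi t ht
      split_ifs with hai
      · rw [indicator_of_mem]
        rw [mem_ball] at hai ⊢
        have h1 := hosc i hi t ht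
        have h2 := dist_triangle (γ t) (a i) 0
        rw [dist_comm (γ t) (a i)] at h2
        have : dist (a i) (γ t) < η := h1
        linarith
      · exact zero_le
    · intro y; exact le_add_self
  set σ' : Eucl (k+1) → ℝ≥0∞ := (ball 0 M).indicator (fun x =>
    ∑ i ∈ Finset.range N, (ball (a i) (ε + η)).indicator (fun _ => d i * W⁻¹) x) with hσ'
  have hsumm : Measurable (fun x => ∑ i ∈ Finset.range N,
      (ball (a i) (ε + η)).indicator (fun _ => d i * W⁻¹) x) :=
    Finset.measurable_sum _ fun i _ => measurable_const.indicator measurableSet_ball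
  have hσ'm : Measurable σ' := hsumm.indicator measurableSet_ball
  have hadm : σ' ∈ setAdm k 𝒮 := by
    refine ⟨hσ'm, fun S hS => ?_⟩
    have hSm := (hC S hS).1
    have e1 : ∫⁻ x in S, σ' x ∂μH[(k:ℝ)] = ∫⁻ x in S, (∑ i ∈ Finset.range N,
        (ball (a i) (ε + η)).indicator (fun _ => d i * W⁻¹) x) ∂μH[(k:ℝ)] := by
      refine setLIntegral_congr_fun hSm fun x hx => ?_
      simp only [hσ']
      rw [indicator_of_mem (hM S hS hx)]
    rw [e1, lintegral_finsetSum _ (fun i _ => measurable_const.indicator measurableSet_ball)]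
    have e2 : ∀ i ∈ Finset.range N, ∫⁻ x in S, (ball (a i) (ε + η)).indicator
        (fun _ => d i * W⁻¹) x ∂μH[(k:ℝ)] =
        (d i * (μH[(k:ℝ)] : Measure (Eucl (k+1))) (S ∩ ball (a i) (ε + η))) * W⁻¹ := by
      intro i _
      rw [lintegral_indicator_const measurableSet_ball, Measure.restrict_apply measurableSet_ball,
        inter_comm S]
      ring
    rw [Finset.sum_congr rfl e2, ← Finset.sum_mul, ← div_eq_mul_inv,
      ENNReal.le_div_iff_mul_le (Or.inl hW0) (Or.inl hWt), one_mul, hW]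
    exact chain_est (hC S hS) N a ha0 haN η hstep
  have hbd : ∀ x, σ' x ≤ (ball 0 M).indicator (fun _ => (ENNReal.ofReal δ * W)⁻¹) x := by
    intro x
    simp only [hσ']
    by_cases hx : x ∈ ball (0 : Eucl (k+1)) M
    · rw [indicator_of_mem hx, indicator_of_mem hx]
      rw [ENNReal.mul_inv (Or.inl hδ0) (Or.inl ENNReal.ofReal_ne_top)]
      calc ∑ i ∈ Finset.range N, (ball (a i) (ε + η)).indicator (fun _ => d i * W⁻¹) x
          ≤ ∑ i ∈ Finset.range N, (d i * (if a i ∈ ball (0 : Eucl (k+1)) (M + ε + η)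
              then ENNReal.ofReal δ else 0)) * ((ENNReal.ofReal δ)⁻¹ * W⁻¹) := by
            refine Finset.sum_le_sum fun i _ => ?_
            by_cases hxi : x ∈ ball (a i) (ε + η)
            · rw [indicator_of_mem hxi, if_pos]
              · rw [mul_assoc, ← mul_assoc (ENNReal.ofReal δ),
                  ENNReal.mul_inv_cancel hδ0 ENNReal.ofReal_ne_top, one_mul]
              · rw [mem_ball] at hx hxi ⊢
                have := dist_triangle (a i) x 0
                rw [dist_comm (a i) x] at this
                linarith
            · rw [indicator_of_notMem hxi]; exact zero_le
        _ ≤ 1 * ((ENNReal.ofReal δ)⁻¹ * W⁻¹) := by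
            rw [← Finset.sum_mul]
            exact mul_le_mul_left hlen _
        _ = _ := one_mul _
    · rw [indicator_of_notMem hx]; exact zero_le
  have hK := H σ' hadm hbd
  have h1 : ∫⁻ x, ρ0 x * σ' x ≤ ∑ i ∈ Finset.range N, d i * W⁻¹ *
      ∫⁻ x in ball (a i) (ε + η), ρ0 x := by
    calc ∫⁻ x, ρ0 x * σ' x ≤ ∫⁻ x, ∑ i ∈ Finset.range N, d i * W⁻¹ *
          (ball (a i) (ε + η)).indicator ρ0 x := by
          refine lintegral_mono fun x => ?_
          calc ρ0 x * σ' x ≤ ρ0 x * ∑ i ∈ Finset.range N,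
              (ball (a i) (ε + η)).indicator (fun _ => d i * W⁻¹) x :=
                mul_le_mul_right (indicator_le_self _ _ _) _
            _ = _ := by
              rw [Finset.mul_sum]
              refine Finset.sum_congr rfl fun i _ => ?_
              by_cases hxi : x ∈ ball (a i) (ε + η)
              · rw [indicator_of_mem hxi, indicator_of_mem hxi, mul_comm]
              · rw [indicator_of_notMem hxi, indicator_of_notMem hxi, mul_zero, mul_zero]
      _ = _ := by
          rw [lintegral_finsetSum _ (fun i _ => (hρ0.indicator measurableSet_ball).const_mul _)]
          refine Finset.sum_congr rfl fun i _ => ?_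
          rw [lintegral_const_mul _ (hρ0.indicator measurableSet_ball),
            lintegral_indicator measurableSet_ball]
  have h2 : ∑ i ∈ Finset.range N, d i * ((K * W)⁻¹ * ∫⁻ x in ball (a i) (ε + η), ρ0 x) ≤
      curveInt γ (fun y => (K * W)⁻¹ * (∫⁻ x in ball y (ε + 2*η), ρ0 x) +
      (ball 0 (M + 3*ε)).indicator (fun _ => ENNReal.ofReal δ) y) := by
    refine curve_sum γ hγc N hN _ _ ?_
    intro i hi t ht
    refine le_trans (mul_le_mul_right (lintegral_mono_set (ball_subset_ball' ?_)) _) le_self_add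
    have : dist (a i) (γ t) < η := hosc i hi t ht
    linarith
  have h3 : ∑ i ∈ Finset.range N, d i * ((K * W)⁻¹ * ∫⁻ x in ball (a i) (ε + η), ρ0 x) =
      K⁻¹ * ∑ i ∈ Finset.range N, d i * W⁻¹ * ∫⁻ x in ball (a i) (ε + η), ρ0 x := by
    rw [Finset.mul_sum]
    refine Finset.sum_congr rfl fun i _ => ?_
    rw [ENNReal.mul_inv (Or.inl hK0) (Or.inl hKt)]
    ring
  rw [h3] at h2
  refine absurd (le_trans ?_ h2) (not_le.2 hlt)
  calc (1:ℝ≥0∞) = K⁻¹ * K := (ENNReal.inv_mul_cancel hK0 hKt).symm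
    _ ≤ _ := mul_le_mul_right (hK.trans h1) _

end

section

lemma setMod_lt_top (k : ℕ) (s : ℝ) (hs : 0 < s) (A B : Set (Eucl (k+1))) (ε M : ℝ)
    (hε : 0 < ε) (𝒮 : Set (Set (Eucl (k+1))))
    (hC : ∀ S ∈ 𝒮, Crosses k A B ε S) (hM : ∀ S ∈ 𝒮, S ⊆ ball 0 M)
    (y₀ y₁ : Eucl (k+1)) (h0 : y₀ ∈ A) (h1 : y₁ ∈ B) : setMod k s 𝒮 ≠ ⊤ := by
  set W : ℝ≥0∞ := cst k * volume (ball (0 : Eucl (k+1)) ε) with hW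
  have hW0 : W ≠ 0 := by
    rw [hW]
    refine mul_ne_zero ?_ (measure_ball_pos _ _ hε).ne'
    have := one_le_cst k
    intro h; rw [ENNReal.coe_eq_zero] at h; rw [h] at this; norm_num at this
  have hWt : W ≠ ⊤ := by
    rw [hW]; exact ENNReal.mul_ne_top ENNReal.coe_ne_top measure_ball_lt_top.ne
  set a : ℕ → Eucl (k+1) := fun i => if i = 0 then y₀ else y₁ with ha
  have hadm : (ball (0 : Eucl (k+1)) M).indicator
      (fun _ => ENNReal.ofReal (dist y₀ y₁) * W⁻¹) ∈ setAdm k 𝒮 := by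
    refine ⟨measurable_const.indicator measurableSet_ball, fun S hS => ?_⟩
    have h := chain_est (hC S hS) 1 a (by simpa [ha] using h0) (by simpa [ha] using h1)
      (dist y₀ y₁ + 1) (fun i hi => by
        have : i = 0 := by omega
        subst this
        simp [ha])
    simp only [Finset.range_one, Finset.sum_singleton] at h
    rw [lintegral_indicator_const measurableSet_ball, Measure.restrict_apply measurableSet_ball,
      inter_eq_right.2 (hM S hS), mul_right_comm, ← div_eq_mul_inv,
      ENNReal.le_div_iff_mul_le (Or.inl hW0) (Or.inl hWt), one_mul]
    refine h.trans ?_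
    simp only [ha, if_true]
    exact mul_le_mul_right (measure_mono inter_subset_left) _
  refine ne_top_of_le_ne_top ?_ (setMod_le hadm)
  have e : ∀ x, (ball (0 : Eucl (k+1)) M).indicator
      (fun _ => ENNReal.ofReal (dist y₀ y₁) * W⁻¹) x ^ s = (ball (0 : Eucl (k+1)) M).indicator
      (fun _ => (ENNReal.ofReal (dist y₀ y₁) * W⁻¹) ^ s) x := by
    intro x
    by_cases hx : x ∈ ball (0 : Eucl (k+1)) M
    · rw [indicator_of_mem hx, indicator_of_mem hx]
    · rw [indicator_of_notMem hx, indicator_of_notMem hx, ENNReal.zero_rpow_of_pos hs]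
  simp only [e]
  rw [lintegral_indicator_const measurableSet_ball]
  refine ENNReal.mul_ne_top (ENNReal.rpow_ne_top_of_nonneg hs.le ?_) measure_ball_lt_top.ne
  exact ENNReal.mul_ne_top ENNReal.ofReal_ne_top (ENNReal.inv_ne_top.2 hW0)

lemma ind_rpow {X : Type*} [MeasurableSpace X] (μ : Measure X) (S : Set X) (hS : MeasurableSet S)
    (c : ℝ≥0∞) (s : ℝ) (hs : 0 < s) :
    (∫⁻ x, S.indicator (fun _ => c) x ^ s ∂μ) ^ (1/s) = c * μ S ^ (1/s) := by
  have e : ∀ x, S.indicator (fun _ => c) x ^ s = S.indicator (fun _ => c ^ s) x := by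
    intro x
    by_cases hx : x ∈ S
    · rw [indicator_of_mem hx, indicator_of_mem hx]
    · rw [indicator_of_notMem hx, indicator_of_notMem hx, ENNReal.zero_rpow_of_pos hs]
  simp only [e]
  rw [lintegral_indicator_const hS, ENNReal.mul_rpow_of_nonneg _ _ (by positivity),
    ← ENNReal.rpow_mul, mul_one_div_cancel hs.ne', ENNReal.rpow_one]

lemma norm_bound (k : ℕ) (s q : ℝ) (hsq : s.HolderConjugate q) (A B G : Set (Eucl (k+1)))
    (ε M : ℝ) (hε : 0 < ε) (𝒮 : Set (Set (Eucl (k+1))))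
    (hC : ∀ S ∈ 𝒮, Crosses k A B ε S) (hM : ∀ S ∈ 𝒮, S ⊆ ball 0 M)
    (hJ0 : setMod k s 𝒮 ≠ 0) (hJt : setMod k s 𝒮 ≠ ⊤) (t : ℝ) (ht0 : 0 < t) (ht1 : t < 1)
    (ht : 0 < (1-t) ^ (s-1) - t)
    (W : ℝ≥0∞) (hW : W = cst k * volume (ball (0 : Eucl (k+1)) ε)) :
    curveModulus q (curveJoin A B G) ^ (1/q) ≤
      (ENNReal.ofReal ((1-t) ^ (s-1) - t) * setMod k s 𝒮 * W)⁻¹ *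
        (volume (ball (0 : Eucl (k+1)) (ε + 2*(t*ε))) *
        ((setMod k s 𝒮 + ENNReal.ofReal (s * t * t) * setMod k s 𝒮) ^ (1/s) +
          ENNReal.ofReal t * (ENNReal.ofReal (√t) * W)⁻¹ *
            volume (ball (0 : Eucl (k+1)) M) ^ (1/s)) ^ (s/q)) +
      ENNReal.ofReal (√t) * volume (ball (0 : Eucl (k+1)) (M + 3*ε)) ^ (1/q) := by
  have hs1 : 1 < s := hsq.lt
  have hq1 : 1 < q := hsq.symm.lt
  have hW0 : W ≠ 0 := by
    rw [hW]
    refine mul_ne_zero ?_ (measure_ball_pos _ _ hε).ne'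
    have := one_le_cst k
    intro h; rw [ENNReal.coe_eq_zero] at h; rw [h] at this; norm_num at this
  have hst : 0 < √t := Real.sqrt_pos.2 ht0
  set J := setMod k s 𝒮 with hJ
  set L := (ENNReal.ofReal (√t) * W)⁻¹ with hL
  have hLt : L ≠ ⊤ := by
    rw [hL, ENNReal.inv_ne_top]
    refine mul_ne_zero ?_ hW0
    rw [Ne, ENNReal.ofReal_eq_zero, not_le]; exact hst
  set K := ENNReal.ofReal ((1-t) ^ (s-1) - t) * J with hK
  have hK0 : K ≠ 0 := by
    refine mul_ne_zero ?_ hJ0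
    rw [Ne, ENNReal.ofReal_eq_zero, not_le]; exact ht
  have hKt : K ≠ ⊤ := ENNReal.mul_ne_top ENNReal.ofReal_ne_top hJt
  obtain ⟨σ, hσ, hσJ⟩ : ∃ σ ∈ setAdm k 𝒮, ∫⁻ x, σ x ^ s ≤ J + ENNReal.ofReal (s*t*t) * J := by
    have : J < J + ENNReal.ofReal (s*t*t) * J := by
      refine ENNReal.lt_add_right hJt (mul_ne_zero ?_ hJ0)
      rw [Ne, ENNReal.ofReal_eq_zero, not_le]; positivity
    conv at this => lhs; rw [hJ, setMod]
    simp only [iInf_lt_iff] at this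
    obtain ⟨σ, h1, h2⟩ := this
    exact ⟨σ, h1, h2.le⟩
  have hm := hσ.1
  set h : Eucl (k+1) → ℝ≥0∞ := (ball 0 M).indicator (fun _ => ENNReal.ofReal t * L) with hh
  have hhm : Measurable h := measurable_const.indicator measurableSet_ball
  set ρ0 : Eucl (k+1) → ℝ≥0∞ := fun x => (σ x + h x) ^ (s-1) with hρ0
  have hρ0m : Measurable ρ0 := by fun_prop
  set ρ : Eucl (k+1) → ℝ≥0∞ := fun y => (K * W)⁻¹ * (∫⁻ x in ball y (ε + 2*(t*ε)), ρ0 x) +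
      (ball 0 (M + 3*ε)).indicator (fun _ => ENNReal.ofReal (√t)) y with hρ
  have havg : Measurable (fun y : Eucl (k+1) => ∫⁻ x in ball y (ε + 2*(t*ε)), ρ0 x) := by
    have hmeas : MeasurableSet {z : Eucl (k+1) × Eucl (k+1) | dist z.2 z.1 < ε + 2*(t*ε)} :=
      measurableSet_lt (by fun_prop) measurable_const
    have hF : Measurable (fun z : Eucl (k+1) × Eucl (k+1) =>
        {z : Eucl (k+1) × Eucl (k+1) | dist z.2 z.1 < ε + 2*(t*ε)}.indicator
          (fun z => ρ0 z.2) z) := Measurable.indicator (by fun_prop) hmeas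
    have e1 : ∀ y : Eucl (k+1), ∫⁻ x in ball y (ε + 2*(t*ε)), ρ0 x = ∫⁻ x,
        {z : Eucl (k+1) × Eucl (k+1) | dist z.2 z.1 < ε + 2*(t*ε)}.indicator
          (fun z => ρ0 z.2) (y, x) := by
      intro y
      rw [← lintegral_indicator measurableSet_ball]
      rfl
    simp only [e1]
    exact hF.lintegral_prod_right'
  have hind : Measurable ((ball (0 : Eucl (k+1)) (M + 3*ε)).indicator
      (fun _ => ENNReal.ofReal (√t))) := measurable_const.indicator measurableSet_ball
  have hρm : Measurable ρ := (havg.const_mul _).add hind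
  have hρadm : ∀ γ ∈ curveJoin A B G, 1 ≤ curveInt γ ρ := by
    intro γ hγ
    refine curve_adm k A B G ε M (t*ε) (√t) hε (by positivity) (by nlinarith) hst 𝒮 hC hM W hW
      ρ0 hρ0m K hK0 hKt ?_ γ hγ
    intro σ' hσ' hbd
    have hfin : ∀ x, σ' x ≠ ⊤ := fun x => ne_top_of_le_ne_top (by
      by_cases hx : x ∈ ball (0 : Eucl (k+1)) M
      · rw [indicator_of_mem hx]; exact hLt
      · rw [indicator_of_notMem hx]; exact ENNReal.zero_ne_top) (hbd x)
    refine (variational k s hs1 𝒮 hJt t ht0 ht1 σ hσ hσJ σ' hσ' hfin).trans ?_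
    refine lintegral_mono fun x => ?_
    refine mul_le_mul_left (ENNReal.rpow_le_rpow (add_le_add ?_ ?_) (by linarith)) _
    · refine (mul_le_mul_left (ENNReal.ofReal_le_ofReal (show 1 - t ≤ 1 by linarith)) _).trans ?_
      simp
    · refine (mul_le_mul_right (hbd x) _).trans (le_of_eq ?_)
      simp only [hh]
      by_cases hx : x ∈ ball (0 : Eucl (k+1)) M
      · rw [indicator_of_mem hx, indicator_of_mem hx]
      · rw [indicator_of_notMem hx, indicator_of_notMem hx, mul_zero]
  have hmod : curveModulus q (curveJoin A B G) ≤ ∫⁻ x, ρ x ^ q := iInf₂_le ρ ⟨hρm, hρadm⟩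
  refine (ENNReal.rpow_le_rpow hmod (by positivity)).trans ?_
  have hmink := ENNReal.lintegral_Lp_add_le (μ := (volume : Measure (Eucl (k+1))))
    (f := fun y => (K * W)⁻¹ * (∫⁻ x in ball y (ε + 2*(t*ε)), ρ0 x))
    (g := (ball (0 : Eucl (k+1)) (M + 3*ε)).indicator (fun _ => ENNReal.ofReal (√t)))
    (havg.const_mul _).aemeasurable hind.aemeasurable hq1.le
  refine le_trans hmink (add_le_add ?_ ?_)
  swap
  · exact (ind_rpow _ _ measurableSet_ball _ _ (by linarith)).le
  have hρ0q : ∫⁻ x, ρ0 x ^ q = ∫⁻ x, (σ x + h x) ^ s := by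
    refine lintegral_congr fun x => ?_
    simp only [hρ0]
    rw [← ENNReal.rpow_mul, hsq.sub_one_mul_conj]
  have hmink2 := ENNReal.lintegral_Lp_add_le (μ := (volume : Measure (Eucl (k+1))))
    (f := σ) (g := h) hm.aemeasurable hhm.aemeasurable hs1.le
  have h5 : (∫⁻ x, ρ0 x ^ q) ^ (1/q) ≤ ((J + ENNReal.ofReal (s * t * t) * J) ^ (1/s) +
          ENNReal.ofReal t * L * volume (ball (0 : Eucl (k+1)) M) ^ (1/s)) ^ (s/q) := by
    have hs0 : s ≠ 0 := by linarith
    have : (∫⁻ x, ρ0 x ^ q) ^ (1/q) = ((∫⁻ x, ρ0 x ^ q) ^ (1/s)) ^ (s/q) := by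
      rw [← ENNReal.rpow_mul]
      congr 1
      field_simp
    rw [this]
    refine ENNReal.rpow_le_rpow ?_ (by positivity)
    rw [hρ0q]
    refine hmink2.trans (add_le_add (ENNReal.rpow_le_rpow hσJ (by positivity)) ?_)
    exact (ind_rpow _ _ measurableSet_ball _ _ (by linarith)).le
  calc (∫⁻ y, ((K * W)⁻¹ * (∫⁻ x in ball y (ε + 2*(t*ε)), ρ0 x)) ^ q) ^ (1/q)
      ≤ (((K * W)⁻¹) ^ q * (volume (ball (0 : Eucl (k+1)) (ε + 2*(t*ε))) ^ q *
          ∫⁻ x, ρ0 x ^ q)) ^ (1/q) := by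
        refine ENNReal.rpow_le_rpow ?_ (by positivity)
        have e : ∀ y : Eucl (k+1), ((K * W)⁻¹ * (∫⁻ x in ball y (ε + 2*(t*ε)), ρ0 x)) ^ q =
            ((K * W)⁻¹) ^ q * (∫⁻ x in ball y (ε + 2*(t*ε)), ρ0 x) ^ q := fun y =>
          ENNReal.mul_rpow_of_nonneg _ _ (by linarith)
        simp only [e]
        rw [lintegral_const_mul _ (havg.pow_const q)]
        exact mul_le_mul_right (avg_contract (k+1) ρ0 hρ0m _ s q hsq) _
    _ = (K * W)⁻¹ * (volume (ball (0 : Eucl (k+1)) (ε + 2*(t*ε))) *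
          (∫⁻ x, ρ0 x ^ q) ^ (1/q)) := by
        have hq0 : q ≠ 0 := by linarith
        rw [ENNReal.mul_rpow_of_nonneg _ _ (by positivity),
          ENNReal.mul_rpow_of_nonneg _ _ (by positivity), ← ENNReal.rpow_mul, ← ENNReal.rpow_mul,
          mul_one_div_cancel hq0, ENNReal.rpow_one, ENNReal.rpow_one]
    _ ≤ _ := mul_le_mul_right (mul_le_mul_right h5 _) _

end

section

lemma core (k : ℕ) (s q : ℝ) (hsq : s.HolderConjugate q) (A B G : Set (Eucl (k+1)))
    (ε M : ℝ) (hε : 0 < ε) (𝒮 : Set (Set (Eucl (k+1))))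
    (hC : ∀ S ∈ 𝒮, Crosses k A B ε S) (hM : ∀ S ∈ 𝒮, S ⊆ ball 0 M) :
    curveModulus q (curveJoin A B G) ≤ (cst k * setMod k s 𝒮) ^ (-(q-1)) := by
  have hs1 : 1 < s := hsq.lt
  have hq1 : 1 < q := hsq.symm.lt
  by_cases hne : (curveJoin A B G).Nonempty
  swap
  · rw [not_nonempty_iff_eq_empty] at hne
    rw [hne]
    refine le_trans (iInf₂_le (fun _ => 0) ⟨measurable_const, by simp⟩) ?_
    simp [ENNReal.zero_rpow_of_pos (show 0 < q by linarith)]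
  obtain ⟨γ, hγ⟩ := hne
  have hJt := setMod_lt_top k s (by linarith) A B ε M hε 𝒮 hC hM _ _ hγ.2.1 hγ.2.2.1
  by_cases hJ0 : setMod k s 𝒮 = 0
  · rw [hJ0, mul_zero, ENNReal.zero_rpow_of_neg (by linarith)]; exact le_top
  have hc1 : (1:ℝ) ≤ (cst k : ℝ) := by exact_mod_cast one_le_cst k
  set c : ℝ := (cst k : ℝ) with hc
  have hcE : (cst k : ℝ≥0∞) = ENNReal.ofReal c := (ENNReal.ofReal_coe_nnreal).symm
  set j := (setMod k s 𝒮).toReal with hj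
  have hj0 : 0 < j := ENNReal.toReal_pos hJ0 hJt
  have hJE : setMod k s 𝒮 = ENNReal.ofReal j := (ENNReal.ofReal_toReal hJt).symm
  set v := (volume (ball (0 : Eucl (k+1)) ε)).toReal with hv
  have hv0 : 0 < v := ENNReal.toReal_pos (measure_ball_pos _ _ hε).ne' measure_ball_lt_top.ne
  have hvE : volume (ball (0 : Eucl (k+1)) ε) = ENNReal.ofReal v :=
    (ENNReal.ofReal_toReal measure_ball_lt_top.ne).symm
  set β := (volume (ball (0 : Eucl (k+1)) M)).toReal with hβ
  have hβE : volume (ball (0 : Eucl (k+1)) M) = ENNReal.ofReal β :=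
    (ENNReal.ofReal_toReal measure_ball_lt_top.ne).symm
  have hβ0 : 0 ≤ β := ENNReal.toReal_nonneg
  set β' := (volume (ball (0 : Eucl (k+1)) (M + 3*ε))).toReal with hβ'
  have hβ'E : volume (ball (0 : Eucl (k+1)) (M + 3*ε)) = ENNReal.ofReal β' :=
    (ENNReal.ofReal_toReal measure_ball_lt_top.ne).symm
  have hβ'0 : 0 ≤ β' := ENNReal.toReal_nonneg
  set Φ : ℝ → ℝ := fun t => (((1-t) ^ (s-1) - t) * j * (c*v))⁻¹ * (((1+2*t)^(k+1) * v) *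
    ((j + s*t*t*j) ^ (1/s) + √t * (c*v)⁻¹ * β ^ (1/s)) ^ (s/q)) + √t * β' ^ (1/q) with hΦ
  have hcont : ContinuousAt Φ 0 := by
    have c1 : Continuous fun t : ℝ => (1-t) ^ (s-1) :=
      (by fun_prop : Continuous fun t : ℝ => 1 - t).rpow_const (fun _ => Or.inr (by linarith))
    have c2 : Continuous fun t : ℝ => (j + s*t*t*j) ^ (1/s) :=
      (by fun_prop : Continuous fun t : ℝ => j + s*t*t*j).rpow_const
        (fun _ => Or.inr (by positivity))
    have c3 : Continuous fun t : ℝ => ((j + s*t*t*j) ^ (1/s) + √t * (c*v)⁻¹ * β ^ (1/s)) ^ (s/q) :=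
      (by fun_prop : Continuous fun t : ℝ =>
        (j + s*t*t*j) ^ (1/s) + √t * (c*v)⁻¹ * β ^ (1/s)).rpow_const
        (fun _ => Or.inr (by positivity))
    have c4 : ContinuousAt (fun t : ℝ => (((1-t) ^ (s-1) - t) * j * (c*v))⁻¹) 0 := by
      refine ContinuousAt.inv₀ (by fun_prop) ?_
      simp only [sub_zero, Real.one_rpow, one_mul]
      positivity
    exact (c4.mul (by fun_prop)).add (by fun_prop)
  have hev : ∀ᶠ t in 𝓝[>] (0:ℝ), 0 < t ∧ t < 1 ∧ 0 < (1-t) ^ (s-1) - t := by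
    have c1 : Continuous fun t : ℝ => (1-t) ^ (s-1) - t :=
      ((by fun_prop : Continuous fun t : ℝ => 1 - t).rpow_const
        (fun _ => Or.inr (by linarith))).sub continuous_id
    have h1 : ∀ᶠ t in 𝓝 (0:ℝ), 0 < (1-t) ^ (s-1) - t :=
      c1.continuousAt.eventually (lt_mem_nhds (by simp))
    have h2 : ∀ᶠ t in 𝓝 (0:ℝ), t < 1 := gt_mem_nhds one_pos
    filter_upwards [self_mem_nhdsWithin, nhdsWithin_le_nhds h1, nhdsWithin_le_nhds h2]
      with t a b d using ⟨a, d, b⟩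
  have hbound : ∀ᶠ t in 𝓝[>] (0:ℝ),
      curveModulus q (curveJoin A B G) ^ (1/q) ≤ ENNReal.ofReal (Φ t) := by
    filter_upwards [hev] with t ⟨ht0, ht1, ht⟩
    have h := norm_bound k s q hsq A B G ε M hε 𝒮 hC hM hJ0 hJt t ht0 ht1 ht _ rfl
    refine h.trans (le_of_eq ?_)
    have hst : 0 < √t := Real.sqrt_pos.2 ht0
    have hball : volume (ball (0 : Eucl (k+1)) (ε + 2*(t*ε))) =
        ENNReal.ofReal ((1+2*t)^(k+1) * v) := by
      rw [show ε + 2*(t*ε) = (1+2*t)*ε by ring, Measure.addHaar_ball_mul _ _ (by positivity), hvE,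
        finrank_euclideanSpace_fin, ENNReal.ofReal_mul (by positivity)]
    have hsq' : t * (√t * (c*v))⁻¹ = √t * (c*v)⁻¹ := by
      have := Real.mul_self_sqrt ht0.le
      field_simp
      nlinarith
    have hcv : 0 < c * v := by positivity
    rw [hball, hJE, hvE, hβE, hβ'E, hcE]
    simp only [hΦ]
    rw [← hsq']
    generalize (1-t) ^ (s-1) - t = κ at ht
    have hs0 : 0 < s := by linarith
    have hq0 : 0 < q := by linarith
    have e1 : ENNReal.ofReal c * ENNReal.ofReal v = ENNReal.ofReal (c*v) :=
      (ENNReal.ofReal_mul (by linarith)).symm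
    rw [e1]
    generalize c * v = w at hcv
    have hv' : 0 ≤ (1+2*t)^(k+1) * v := by positivity
    generalize (1+2*t)^(k+1) * v = v' at hv'
    have e2 : (ENNReal.ofReal κ * ENNReal.ofReal j * ENNReal.ofReal w)⁻¹ =
        ENNReal.ofReal ((κ * j * w)⁻¹) := by
      rw [← ENNReal.ofReal_mul ht.le, ← ENNReal.ofReal_mul (by positivity),
        ENNReal.ofReal_inv_of_pos (by positivity)]
    have e3 : (ENNReal.ofReal j + ENNReal.ofReal (s*t*t) * ENNReal.ofReal j) ^ (1/s) =
        ENNReal.ofReal ((j + s*t*t*j) ^ (1/s)) := by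
      rw [← ENNReal.ofReal_mul (by positivity), ← ENNReal.ofReal_add (by positivity) (by positivity),
        ENNReal.ofReal_rpow_of_nonneg (by positivity) (by positivity)]
    have e4 : ENNReal.ofReal t * (ENNReal.ofReal √t * ENNReal.ofReal w)⁻¹ *
        ENNReal.ofReal β ^ (1/s) = ENNReal.ofReal (t * (√t * w)⁻¹ * β ^ (1/s)) := by
      rw [← ENNReal.ofReal_mul hst.le, ← ENNReal.ofReal_inv_of_pos (by positivity),
        ENNReal.ofReal_rpow_of_nonneg hβ0 (by positivity),
        ← ENNReal.ofReal_mul ht0.le, ← ENNReal.ofReal_mul (by positivity)]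
    rw [e2, e3, e4, ← ENNReal.ofReal_add (by positivity) (by positivity),
      ENNReal.ofReal_rpow_of_nonneg (by positivity) (by positivity), ← ENNReal.ofReal_mul hv',
      ← ENNReal.ofReal_mul (by positivity), ENNReal.ofReal_rpow_of_nonneg hβ'0 (by positivity),
      ← ENNReal.ofReal_mul hst.le, ← ENNReal.ofReal_add (by positivity) (by positivity)]
  have hlim : curveModulus q (curveJoin A B G) ^ (1/q) ≤ ENNReal.ofReal (Φ 0) :=
    ge_of_tendsto ((ENNReal.continuous_ofReal.continuousAt.tendsto.comp
      hcont.tendsto).mono_left nhdsWithin_le_nhds) hbound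
  have hΦ0 : Φ 0 = (c*j)⁻¹ * j ^ (1/q) := by
    simp only [hΦ, sub_zero, Real.one_rpow, mul_zero, add_zero, one_pow, Real.sqrt_zero, zero_mul,
      one_mul]
    rw [← Real.rpow_mul hj0.le, show 1/s * (s/q) = 1/q by field_simp]
    field_simp
  have hq0 : q ≠ 0 := by linarith
  have h1 : curveModulus q (curveJoin A B G) ≤ ENNReal.ofReal (Φ 0) ^ q := by
    have := ENNReal.rpow_le_rpow hlim (show 0 ≤ q by linarith)
    rwa [← ENNReal.rpow_mul, one_div_mul_cancel hq0, ENNReal.rpow_one] at this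
  refine h1.trans ?_
  have hcj : 0 < c * j := by positivity
  rw [hJE, hcE, ← ENNReal.ofReal_mul (by linarith), ENNReal.ofReal_rpow_of_pos hcj, hΦ0,
    ENNReal.ofReal_rpow_of_pos (by positivity)]
  refine ENNReal.ofReal_le_ofReal ?_
  rw [Real.mul_rpow (by positivity) (by positivity), ← Real.rpow_mul hj0.le,
    one_div_mul_cancel hq0, Real.rpow_one, show -(q-1) = -q + 1 by ring,
    Real.rpow_add_one hcj.ne', Real.rpow_neg hcj.le, Real.inv_rpow hcj.le]
  refine mul_le_mul_of_nonneg_left ?_ (by positivity)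
  nlinarith

end

section

lemma crosses_all (k : ℕ) (D : Set (Eucl (k+1))) (x₀ : Eucl (k+1)) (f : Eucl (k+1) → Eucl (k+1))
    (hf : IsHomeoOn f D (f '' D)) (r₁ r₂ a b : ℝ) (ha : r₁ < a) (hb : b < r₂)
    (hsub : closedBall x₀ r₂ ⊆ D) :
    ∃ ε > 0, ∀ r ∈ Ioo a b, Crosses k (f '' sphere x₀ r₁) (f '' sphere x₀ r₂) ε
      (f '' sphere x₀ r) := by
  by_cases hab : a < b
  swap
  · exact ⟨1, one_pos, fun r hr => absurd (hr.1.trans hr.2) hab⟩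
  have hsubr : ∀ r ≤ r₂, closedBall x₀ r ⊆ D := fun r hr =>
    (closedBall_subset_closedBall hr).trans hsub
  have hcomp : ∀ K ⊆ D, IsCompact K → IsCompact (f '' K) := fun K hK hc =>
    hc.image_of_continuousOn (hf.continuousOn.mono hK)
  have hopen : ∀ r ≤ r₂, IsOpen (f '' ball x₀ r) := fun r hr =>
    hf.isOpenMapOn _ (ball_subset_closedBall.trans (hsubr r hr)) isOpen_ball
  obtain ⟨ε₁, h1, h1'⟩ := (hcomp (sphere x₀ r₁)
    (sphere_subset_closedBall.trans (hsubr _ (by linarith))) (isCompact_sphere _ _)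
    ).exists_thickening_subset_open (hopen a (by linarith)) (by
      refine image_mono ?_
      intro x hx
      rw [mem_sphere] at hx
      rw [mem_ball]; linarith)
  obtain ⟨ε₂, h2, h2'⟩ := (hcomp (sphere x₀ r₂)
    (sphere_subset_closedBall.trans (hsubr _ le_rfl)) (isCompact_sphere _ _)
    ).exists_thickening_subset_open (hcomp (closedBall x₀ b) (hsubr _ hb.le)
      (isCompact_closedBall _ _)).isClosed.isOpen_compl (by
      rintro _ ⟨x, hx, rfl⟩ ⟨y, hy, hxy⟩
      have := hf.injOn (hsubr _ hb.le hy) (hsub (sphere_subset_closedBall hx)) hxy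
      subst this
      rw [mem_sphere] at hx
      rw [mem_closedBall] at hy
      linarith)
  refine ⟨min ε₁ ε₂, lt_min h1 h2, fun r hr => ⟨?_, f '' ball x₀ r, ?_, ?_, ?_, ?_⟩⟩
  · exact (hcomp _ (sphere_subset_closedBall.trans (hsubr _ (by linarith [hr.2])))
      (isCompact_sphere _ _)).isClosed.measurableSet
  · exact hopen r (by linarith [hr.2])
  · rw [(hopen r (by linarith [hr.2])).frontier_eq]
    have hcl : closure (f '' ball x₀ r) ⊆ f '' closedBall x₀ r :=
      closure_minimal (image_mono ball_subset_closedBall)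
        (hcomp _ (hsubr r (by linarith [hr.2])) (isCompact_closedBall _ _)).isClosed
    rintro y ⟨hy1, hy2⟩
    obtain ⟨x, hx, rfl⟩ := hcl hy1
    refine ⟨x, ?_, rfl⟩
    rw [mem_closedBall] at hx
    rw [mem_sphere]
    by_contra hne
    exact hy2 ⟨x, mem_ball.2 (lt_of_le_of_ne hx hne), rfl⟩
  · intro y hy z hz
    refine image_mono (ball_subset_ball hr.1.le) (h1' ?_)
    rw [mem_thickening_iff]
    refine ⟨y, hy, ?_⟩
    rw [mem_ball_zero_iff] at hz
    rw [dist_eq_norm, add_sub_cancel_right]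
    exact hz.trans_le (min_le_left _ _)
  · intro y hy z hz hmem
    refine h2' (a := z + y) ?_ (image_mono (ball_subset_closedBall.trans
      (closedBall_subset_closedBall hr.2.le)) hmem)
    rw [mem_thickening_iff]
    refine ⟨y, hy, ?_⟩
    rw [mem_ball_zero_iff] at hz
    rw [dist_eq_norm, add_sub_cancel_right]
    exact hz.trans_le (min_le_right _ _)

lemma ab_bound (k : ℕ) (hk : 0 < k) (D : Set (Eucl (k+1)))
    (hDopen : IsOpen D) 
    (x₀ : Eucl (k+1)) (hx₀ : x₀ ∈ D)
    (Q : Eucl (k+1) → ℝ) (hQmeas : Measurable Q) (hQpos : ∀ x ∈ D, 0 < Q x)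
    (p : ℝ) (hp : (k : ℝ) < p)
    (f : Eucl (k+1) → Eucl (k+1)) (hf : IsHomeoOn f D (f '' D))
    (hlow : IsLowerQHomeoAt D f (fun x => ENNReal.ofReal (Q x)) p x₀
      (EMetric.infEdist x₀ (frontier D)))
    (r₁ r₂ : ℝ) (hr₁ : 0 < r₁) (hr₁₂ : r₁ < r₂)
    (hr₂ : ENNReal.ofReal r₂ < EMetric.infEdist x₀ (frontier D))
    (a b : ℝ) (ha : r₁ < a) (hab : a < b) (hb : b < r₂) :
    curveModulus (p / (p - k))
        (curveJoin (f '' sphere x₀ r₁) (f '' sphere x₀ r₂) (f '' D)) ≤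
      (∫⁻ r in Ioo a b,
          (sphNorm D x₀ (fun x => ENNReal.ofReal (Q x)) ((k:ℝ)/(p-k)) r)⁻¹)
        ^ (-((k:ℝ)/(p-k))) := by
  have hk0 : (0:ℝ) < k := by exact_mod_cast hk
  have hpk : 0 < p - k := by linarith
  have hsq : (p/k).HolderConjugate (p/(p-k)) := by
    rw [Real.holderConjugate_iff]
    refine ⟨by rw [lt_div_iff₀ hk0]; linarith, ?_⟩
    have : p ≠ 0 := by linarith
    field_simp; ring
  have hsub : closedBall x₀ r₂ ⊆ D := closedBall_sub D hDopen x₀ hx₀ r₂ (by linarith) hr₂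
  obtain ⟨ε, hε, hC⟩ := crosses_all k D x₀ f hf r₁ r₂ a b ha hb hsub
  obtain ⟨M, hM⟩ := (((isCompact_closedBall x₀ r₂).image_of_continuousOn
    (hf.continuousOn.mono hsub)).isBounded).subset_ball 0
  have hsph : ∀ r ∈ Ioo a b, sphere x₀ r ⊆ closedBall x₀ r₂ := fun r hr =>
    sphere_subset_closedBall.trans (closedBall_subset_closedBall (hr.2.trans hb).le)
  have hD : ∀ r ∈ Ioo a b, sphere x₀ r ⊆ D := fun r hr => (hsph r hr).trans hsub
  have hcore := core k _ _ hsq (f '' sphere x₀ r₁) (f '' sphere x₀ r₂) (f '' D) ε M hε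
    ((fun r => f '' sphere x₀ r) '' Ioo a b)
    (by rintro _ ⟨r, hr, rfl⟩; exact hC r hr)
    (by rintro _ ⟨r, hr, rfl⟩; exact (image_mono (hsph r hr)).trans hM)
  refine hcore.trans ?_
  have hexp : p/(p-k) - 1 = k/(p-k) := by field_simp; ring
  rw [hexp, ENNReal.rpow_neg, ENNReal.rpow_neg, ENNReal.inv_le_inv]
  refine ENNReal.rpow_le_rpow ?_ (by positivity)
  have hl := hlow a b (by linarith) hab
    ((ENNReal.ofReal_le_ofReal hb.le).trans_lt hr₂)
  have hs := surf_le_setMod k hk p D x₀ a b hD f hf.continuousOn hf.injOn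
  refine le_trans ?_ (mul_le_mul_right (hl.trans hs) _)
  rw [ENNReal.mul_iInf_of_ne (by have := one_le_cst k; 
                                 exact_mod_cast (lt_of_lt_of_le one_pos this).ne') ENNReal.coe_ne_top]
  refine le_iInf fun ρ => ?_
  by_cases hρ : ρ ∈ extAdm p (k+1-1) (sphereFam D x₀ (Ioo a b))
  · simp only [hρ, iInf_pos]
    exact lower_bound k hk p hp D x₀ _ hQmeas.ennreal_ofReal
      (fun x hx => (ENNReal.ofReal_pos.2 (hQpos x hx)).ne') (fun x => ENNReal.ofReal_ne_top) a b
      (by linarith) hD ρ hρ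
  · simp only [hρ, iInf_false, not_false_eq_true, iInf_neg]
    rw [ENNReal.mul_top (by have := one_le_cst k; 
                            exact_mod_cast (lt_of_lt_of_le one_pos this).ne')]
    exact le_top

lemma lim_bound (g : ℝ → ℝ≥0∞) (r₁ r₂ : ℝ) (h : r₁ < r₂) (X : ℝ≥0∞) (α : ℝ)
    (H : ∀ a b, r₁ < a → a < b → b < r₂ → X ≤ (∫⁻ r in Ioo a b, g r) ^ α) :
    X ≤ (∫⁻ r in Ioo r₁ r₂, g r) ^ α := by
  set d := r₂ - r₁ with hd
  have hd0 : 0 < d := by linarith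
  let u : ℕ → ℝ := fun m => d / (m + 3)
  have hu0 : ∀ m, 0 < u m := fun m => by positivity
  have hu1 : ∀ m, u m ≤ d / 3 := fun m => by
    apply div_le_div_of_nonneg_left hd0.le (by norm_num)
    linarith [(Nat.cast_nonneg m : (0:ℝ) ≤ m)]
  have hmono : Monotone fun m => Ioo (r₁ + u m) (r₂ - u m) := by
    intro m m' hmm
    have : u m' ≤ u m := by
      apply div_le_div_of_nonneg_left hd0.le (by positivity)
      have : (m:ℝ) ≤ m' := by exact_mod_cast hmm
      linarith
    exact Ioo_subset_Ioo (by linarith) (by linarith)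
  have hulim : Tendsto u atTop (𝓝 0) :=
    Tendsto.div_atTop tendsto_const_nhds
      (tendsto_atTop_add_const_right _ _ tendsto_natCast_atTop_atTop)
  have hU : ⋃ m, Ioo (r₁ + u m) (r₂ - u m) = Ioo r₁ r₂ := by
    ext x
    simp only [mem_iUnion, mem_Ioo]
    constructor
    · rintro ⟨m, h1, h2⟩
      have := hu0 m
      constructor <;> linarith
    · rintro ⟨h1, h2⟩
      obtain ⟨m, hm⟩ := (hulim.eventually (gt_mem_nhds
        (show 0 < min (x - r₁) (r₂ - x) from lt_min (by linarith) (by linarith)))).exists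
      have := hm.trans_le (min_le_left _ _)
      have := hm.trans_le (min_le_right _ _)
      exact ⟨m, by linarith, by linarith⟩
  have ht : Tendsto (fun m => ∫⁻ r in Ioo (r₁ + u m) (r₂ - u m), g r) atTop
      (𝓝 (∫⁻ r in Ioo r₁ r₂, g r)) := by
    have := tendsto_measure_iUnion_atTop (μ := volume.withDensity g) hmono
    rw [hU] at this
    simp only [withDensity_apply _ measurableSet_Ioo, Function.comp_def] at this
    exact this
  refine ge_of_tendsto' ((ENNReal.continuous_rpow_const (y := α)).continuousAt.tendsto.comp ht) ?_
  intro m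
  have := hu0 m
  have := hu1 m
  exact H _ _ (by linarith) (by linarith) (by linarith)

end

/-- if `f` is a lower `Q`-homeomorphism at `x₀ ∈ D` w.r.t. the `p`-modulus,
`p > n-1`, then for `0 < r₁ < r₂ < dist(x₀, ∂D)` the `p/(p-n+1)`-modulus of the family of
curves joining `f(S₁)` and `f(S₂)` in `f(D)` is bounded by
`(∫_{r₁}^{r₂} dr/‖Q‖_{(n-1)/(p-n+1)}(r))^{-(n-1)/(p-n+1)}`. -/
theorem stmt_5 (n : ℕ) (hn : 2 ≤ n) (D : Set (Eucl n))
    (hDopen : IsOpen D) (hDconn : IsConnected D)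
    (x₀ : Eucl n) (hx₀ : x₀ ∈ D)
    (Q : Eucl n → ℝ) (hQmeas : Measurable Q) (hQpos : ∀ x ∈ D, 0 < Q x)
    (p : ℝ) (hp : (n : ℝ) - 1 < p)
    (f : Eucl n → Eucl n) (hf : IsHomeoOn f D (f '' D))
    (hlow : IsLowerQHomeoAt D f (fun x => ENNReal.ofReal (Q x)) p x₀
      (EMetric.infEdist x₀ (frontier D)))
    (r₁ r₂ : ℝ) (hr₁ : 0 < r₁) (hr₁₂ : r₁ < r₂)
    (hr₂ : ENNReal.ofReal r₂ < EMetric.infEdist x₀ (frontier D)) :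
    curveModulus (p / (p - (n:ℝ) + 1))
        (curveJoin (f '' sphere x₀ r₁) (f '' sphere x₀ r₂) (f '' D)) ≤
      (∫⁻ r in Ioo r₁ r₂,
          (sphNorm D x₀ (fun x => ENNReal.ofReal (Q x)) (((n:ℝ)-1)/(p-(n:ℝ)+1)) r)⁻¹)
        ^ (-(((n:ℝ)-1)/(p-(n:ℝ)+1))) := by
  obtain ⟨k, rfl⟩ : ∃ k, n = k + 1 := ⟨n - 1, by omega⟩
  have hk : 0 < k := by omega
  have e1 : ((k+1 : ℕ) : ℝ) - 1 = k := by push_cast; ring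
  have e2 : p - ((k+1 : ℕ) : ℝ) + 1 = p - k := by push_cast; ring
  rw [e1] at hp
  rw [e1, e2]
  exact lim_bound _ r₁ r₂ hr₁₂ _ _ fun a b ha hab hb =>
    ab_bound k hk D hDopen x₀ hx₀ Q hQmeas hQpos p hp f hf hlow r₁ r₂ hr₁ hr₁₂ hr₂ a b ha hab hb
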